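/- arXiv:2312.03944 — 3 statements merged into one kernel-verified Lean document; each statement's English description precedes it below -/
import Mathlib

section
/- There exist ℓ ∈ ℝ and a nondecreasing continuously differentiable function φ : ℝ → ℝ such that φ(x) = g((q_ℓ * φ)(x)) for all x ∈ ℝ, lim_{x→−∞} φ(x) = 0, and lim_{x→+∞} φ(x) = 1; that is, a traveling wave with speed ℓ exists. -/
open MeasureTheory Filter Topology

/-- Convolution `(q * u)(x) = ∫ q(y) u(x - y) dy`. -/
noncomputable def conv (q u : ℝ → ℝ) (x : ℝ) : ℝ := ∫ y : ℝ, q y * u (x - y)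

/-- The shifted kernel `q_ℓ(x) = q(x + ℓ)`. -/
def qshift (q : ℝ → ℝ) (ℓ : ℝ) (x : ℝ) : ℝ := q (x + ℓ)

/-- The bistable setting: a `C¹` compactly supported probability density `q`, and a
polynomial `P` (the recursion polynomial, i.e. `g` on `[0,1]`) with `P(0) = 0`, `P(1) = 1`,
`0 < P < 1` and `P' > 0` on `(0,1)`; the nonlinearity `f(x) = P(x) - x` has a unique zero
`θ ∈ (0,1)` and `f'(0) < 0`, `f'(1) < 0` (equivalently `P'(0) < 1`, `P'(1) < 1`). -/
structure BistableSetting where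
  q : ℝ → ℝ
  P : Polynomial ℝ
  θ : ℝ
  hq_diff : ContDiff ℝ 1 q
  hq_supp : HasCompactSupport q
  hq_nonneg : ∀ x, 0 ≤ q x
  hq_int : ∫ x : ℝ, q x = 1
  hP0 : P.eval 0 = 0
  hP1 : P.eval 1 = 1
  hP_range : ∀ x ∈ Set.Ioo (0 : ℝ) 1, 0 < P.eval x ∧ P.eval x < 1
  hP_mono : ∀ x ∈ Set.Ioo (0 : ℝ) 1, 0 < (Polynomial.derivative P).eval x
  hθ_mem : θ ∈ Set.Ioo (0 : ℝ) 1
  hθ_zero : P.eval θ = θ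
  hθ_unique : ∀ x ∈ Set.Ioo (0 : ℝ) 1, P.eval x = x → x = θ
  hf'0 : (Polynomial.derivative P).eval 0 < 1
  hf'1 : (Polynomial.derivative P).eval 1 < 1

/-- The nonlinearity `g`, equal to the polynomial `P` on `[0,1]` and extended linearly:
`g(x) = x + f'(0)·x` for `x < 0` and `g(x) = x + f'(1)(x-1)` for `x > 1`. -/
noncomputable def BistableSetting.g (S : BistableSetting) (x : ℝ) : ℝ :=
  if x < 0 then (Polynomial.derivative S.P).eval 0 * x
  else if x ≤ 1 then S.P.eval x
  else 1 + (Polynomial.derivative S.P).eval 1 * (x - 1)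

/-- A traveling wave with speed `ℓ`: a nondecreasing `C¹` function `φ` with
`φ = g(q_ℓ * φ)`, `φ(-∞) = 0` and `φ(+∞) = 1`. -/
structure IsTravelingWave (S : BistableSetting) (ℓ : ℝ) (φ : ℝ → ℝ) : Prop where
  mono : Monotone φ
  smooth : ContDiff ℝ 1 φ
  wave_eq : ∀ x, φ x = S.g (conv (qshift S.q ℓ) φ x)
  limit_bot : Tendsto φ atBot (𝓝 0)
  limit_top : Tendsto φ atTop (𝓝 1)

/-- Admissible profiles: nondecreasing with values in `[0,1]`. -/
structure Adm (u : ℝ → ℝ) : Prop where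
  mono : Monotone u
  nonneg : ∀ x, 0 ≤ u x
  le_one : ∀ x, u x ≤ 1

/-- Admissible kernels. -/
structure Ker (q : ℝ → ℝ) (R C : ℝ) : Prop where
  cont : Continuous q
  nonneg : ∀ x, 0 ≤ q x
  int_one : ∫ x, q x = 1
  Rnn : 0 ≤ R
  Cnn : 0 ≤ C
  supp : ∀ z, R < |z| → q z = 0
  lip : ∀ u, Adm u → ∀ x y, |conv q u x - conv q u y| ≤ C * |x - y|

/-- Reflected profile. -/
def mirror (u : ℝ → ℝ) (x : ℝ) : ℝ := 1 - u (-x)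

theorem Adm.mirror {u : ℝ → ℝ} (h : Adm u) : Adm (mirror u) where
  mono := fun x y hxy => by
    have := h.mono (neg_le_neg hxy)
    simp only [_root_.mirror]; linarith
  nonneg := fun x => by have := h.le_one (-x); simp only [_root_.mirror]; linarith
  le_one := fun x => by have := h.nonneg (-x); simp only [_root_.mirror]; linarith

theorem Adm.shift {u : ℝ → ℝ} (h : Adm u) (s : ℝ) : Adm (fun x => u (x + s)) where
  mono := fun x y hxy => h.mono (by linarith)
  nonneg := fun x => h.nonneg _
  le_one := fun x => h.le_one _

theorem conv_shift (q u : ℝ → ℝ) (s x : ℝ) :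
    conv q (fun x => u (x + s)) x = conv q u (x + s) := by
  simp only [conv]
  congr 1; ext y; congr 2; ring

namespace Ker
variable {q : ℝ → ℝ} {R C : ℝ}

theorem hcs (K : Ker q R C) : HasCompactSupport q :=
  HasCompactSupport.intro (isCompact_Icc (a := -R) (b := R)) (fun x hx => K.supp x (by
    by_contra h
    exact hx (abs_le.mp (not_lt.mp h))))

theorem integrable (K : Ker q R C) : Integrable q :=
  K.cont.integrable_of_hasCompactSupport K.hcs

theorem integrable_mul (K : Ker q R C) {u : ℝ → ℝ} (hu : Adm u) (x : ℝ) :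
    Integrable (fun y => q y * u (x - y)) := by
  refine K.integrable.mul_bdd (c := 1) ?_ ?_
  · exact (hu.mono.measurable.comp (measurable_const.sub measurable_id)).aestronglyMeasurable
  · refine Eventually.of_forall fun y => ?_
    rw [Real.norm_eq_abs, abs_of_nonneg (hu.nonneg _)]
    exact hu.le_one _

theorem le_conv (K : Ker q R C) {u : ℝ → ℝ} (hu : Adm u) {x a : ℝ}
    (h : ∀ z, |z| ≤ R → a ≤ u (x - z)) : a ≤ conv q u x := by
  have : ∫ y, q y * a = a := by rw [integral_mul_const, K.int_one, one_mul]
  rw [← this]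
  refine integral_mono (K.integrable.mul_const a) (K.integrable_mul hu x) fun y => ?_
  by_cases hy : |y| ≤ R
  · exact mul_le_mul_of_nonneg_left (h y hy) (K.nonneg y)
  · simp [K.supp y (not_le.mp hy)]

theorem conv_le (K : Ker q R C) {u : ℝ → ℝ} (hu : Adm u) {x a : ℝ}
    (h : ∀ z, |z| ≤ R → u (x - z) ≤ a) : conv q u x ≤ a := by
  have : ∫ y, q y * a = a := by rw [integral_mul_const, K.int_one, one_mul]
  rw [← this]
  refine integral_mono (K.integrable_mul hu x) (K.integrable.mul_const a) fun y => ?_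
  by_cases hy : |y| ≤ R
  · exact mul_le_mul_of_nonneg_left (h y hy) (K.nonneg y)
  · simp [K.supp y (not_le.mp hy)]

theorem ge (K : Ker q R C) {u : ℝ → ℝ} (hu : Adm u) (x : ℝ) : u (x - R) ≤ conv q u x :=
  K.le_conv hu fun z hz => hu.mono (by linarith [(abs_le.mp hz).2])

theorem le (K : Ker q R C) {u : ℝ → ℝ} (hu : Adm u) (x : ℝ) : conv q u x ≤ u (x + R) :=
  K.conv_le hu fun z hz => hu.mono (by linarith [(abs_le.mp hz).1])

theorem conv_mono (K : Ker q R C) {u v : ℝ → ℝ} (hu : Adm u) (hv : Adm v) (h : ∀ x, u x ≤ v x)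
    (x : ℝ) : conv q u x ≤ conv q v x :=
  integral_mono (K.integrable_mul hu x) (K.integrable_mul hv x)
    fun y => mul_le_mul_of_nonneg_left (h _) (K.nonneg y)

theorem adm (K : Ker q R C) {u : ℝ → ℝ} (hu : Adm u) : Adm (conv q u) where
  mono := fun x y hxy =>
    integral_mono (K.integrable_mul hu x) (K.integrable_mul hu y)
      fun z => mul_le_mul_of_nonneg_left (hu.mono (by linarith)) (K.nonneg z)
  nonneg := fun x => K.le_conv hu fun z _ => hu.nonneg _
  le_one := fun x => K.conv_le hu fun z _ => hu.le_one _

theorem conv_continuous (K : Ker q R C) {u : ℝ → ℝ} (hu : Adm u) : Continuous (conv q u) := by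
  have : LipschitzWith (Real.toNNReal C) (conv q u) := by
    refine LipschitzWith.of_dist_le_mul fun x y => ?_
    rw [Real.coe_toNNReal _ K.Cnn, Real.dist_eq, Real.dist_eq]
    exact K.lip u hu x y
  exact this.continuous

theorem tendsto_top (K : Ker q R C) {u : ℝ → ℝ} (hu : Adm u) {a : ℝ}
    (h : Tendsto u atTop (𝓝 a)) (ℓ : ℝ) : Tendsto (fun x => conv q u (x + ℓ)) atTop (𝓝 a) := by
  refine tendsto_of_tendsto_of_tendsto_of_le_of_le
    (h.comp (tendsto_atTop_add_const_right atTop (ℓ - R) tendsto_id))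
    (h.comp (tendsto_atTop_add_const_right atTop (ℓ + R) tendsto_id)) (fun x => ?_) (fun x => ?_)
  · have := K.ge hu (x + ℓ)
    simpa [add_sub_assoc] using this
  · have := K.le hu (x + ℓ)
    simpa [add_assoc] using this

theorem tendsto_bot (K : Ker q R C) {u : ℝ → ℝ} (hu : Adm u) {a : ℝ}
    (h : Tendsto u atBot (𝓝 a)) (ℓ : ℝ) : Tendsto (fun x => conv q u (x + ℓ)) atBot (𝓝 a) := by
  refine tendsto_of_tendsto_of_tendsto_of_le_of_le
    (h.comp (tendsto_atBot_add_const_right atBot (ℓ - R) tendsto_id))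
    (h.comp (tendsto_atBot_add_const_right atBot (ℓ + R) tendsto_id)) (fun x => ?_) (fun x => ?_)
  · have := K.ge hu (x + ℓ)
    simpa [add_sub_assoc] using this
  · have := K.le hu (x + ℓ)
    simpa [add_assoc] using this

theorem tendsto_conv (K : Ker q R C) {a : ℕ → ℝ → ℝ} {u : ℝ → ℝ} (ha : ∀ n, Adm (a n))
    (h : ∀ x, Tendsto (fun n => a n x) atTop (𝓝 (u x))) (x : ℝ) :
    Tendsto (fun n => conv q (a n) x) atTop (𝓝 (conv q u x)) := by
  refine tendsto_integral_of_dominated_convergence q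
    (fun n => (K.integrable_mul (ha n) x).aestronglyMeasurable) K.integrable (fun n => ?_) ?_
  · refine Eventually.of_forall fun y => ?_
    rw [norm_mul, Real.norm_eq_abs, Real.norm_eq_abs, abs_of_nonneg (K.nonneg y),
      abs_of_nonneg ((ha n).nonneg _)]
    exact mul_le_of_le_one_right (K.nonneg y) ((ha n).le_one _)
  · exact Eventually.of_forall fun y => (h _).const_mul _

theorem conv_refl (K : Ker q R C) {u : ℝ → ℝ} (hu : Adm u) (x : ℝ) :
    conv (fun z => q (-z)) (mirror u) x = 1 - conv q u (-x) := by
  have h1 : conv (fun z => q (-z)) (mirror u) x = ∫ y, q y * (1 - u (-x - y)) := by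
    rw [← integral_neg_eq_self]
    simp only [conv, mirror]
    congr 1; ext y; congr 3; ring
  rw [h1]
  simp only [mul_sub, mul_one]
  rw [integral_sub K.integrable (K.integrable_mul hu (-x)), K.int_one]
  rfl

theorem refl_refl (u : ℝ → ℝ) : mirror (mirror u) = u := by
  ext x; simp [mirror]

theorem reflect (K : Ker q R C) : Ker (fun z => q (-z)) R C where
  cont := K.cont.comp continuous_neg
  nonneg := fun x => K.nonneg _
  int_one := by rw [integral_neg_eq_self (fun z => q z)]; exact K.int_one
  Rnn := K.Rnn
  Cnn := K.Cnn
  supp := fun z hz => K.supp _ (by rwa [abs_neg])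
  lip := fun u hu x y => by
    have h := fun x => K.conv_refl hu.mirror x
    rw [refl_refl] at h
    rw [h, h]
    have := K.lip _ hu.mirror (-y) (-x)
    calc _ = |conv q (mirror u) (-y) - conv q (mirror u) (-x)| := by congr 1; ring
      _ ≤ _ := this
      _ = _ := by congr 2; ring

end Ker

theorem Adm.exists_bot {u : ℝ → ℝ} (hu : Adm u) :
    ∃ a, Tendsto u atBot (𝓝 a) ∧ 0 ≤ a ∧ ∀ x, a ≤ u x := by
  have hb : BddBelow (Set.range u) := ⟨0, by rintro _ ⟨x, rfl⟩; exact hu.nonneg x⟩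
  exact ⟨_, tendsto_atBot_ciInf hu.mono hb, le_ciInf hu.nonneg, fun x => ciInf_le hb x⟩

theorem Adm.exists_top {u : ℝ → ℝ} (hu : Adm u) :
    ∃ a, Tendsto u atTop (𝓝 a) ∧ a ≤ 1 ∧ ∀ x, u x ≤ a := by
  have hb : BddAbove (Set.range u) := ⟨1, by rintro _ ⟨x, rfl⟩; exact hu.le_one x⟩
  exact ⟨_, tendsto_atTop_ciSup hu.mono hb, ciSup_le hu.le_one, fun x => le_ciSup hb x⟩

/-- Nonlinearities. -/
structure Non (G : ℝ → ℝ) (θ : ℝ) : Prop where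
  cont : Continuous G
  mono : Monotone G
  nonneg : ∀ x, 0 ≤ G x
  le_one : ∀ x, G x ≤ 1
  zero : G 0 = 0
  one : G 1 = 1
  th : G θ = θ
  th0 : 0 < θ
  th1 : θ < 1
  below : ∀ x, 0 < x → x < θ → G x < x
  above : ∀ x, θ < x → x < 1 → x < G x

theorem Non.fix {G : ℝ → ℝ} {θ x : ℝ} (N : Non G θ) (h : G x = x) : x = 0 ∨ x = θ ∨ x = 1 := by
  have h0 := N.nonneg x
  have h1 := N.le_one x
  rw [h] at h0 h1
  rcases h0.eq_or_lt with h0 | h0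
  · exact Or.inl h0.symm
  rcases h1.eq_or_lt with h1 | h1
  · exact Or.inr (Or.inr h1)
  rcases lt_trichotomy x θ with h2 | h2 | h2
  · exact absurd h (N.below x h0 h2).ne
  · exact Or.inr (Or.inl h2)
  · exact absurd h (N.above x h2 h1).ne'

theorem Non.ge {G : ℝ → ℝ} {θ x : ℝ} (N : Non G θ) (h : θ ≤ x) (h1 : x ≤ 1) : x ≤ G x := by
  rcases h.eq_or_lt with h | h
  · rw [← h, N.th]
  rcases h1.eq_or_lt with h1 | h1
  · rw [h1, N.one]
  exact (N.above x h h1).le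

theorem Non.reflect {G : ℝ → ℝ} {θ : ℝ} (N : Non G θ) : Non (fun x => 1 - G (1 - x)) (1 - θ) where
  cont := by have := N.cont; fun_prop
  mono := fun x y h => by
    have := N.mono (show 1 - y ≤ 1 - x by linarith)
    simp only; linarith
  nonneg := fun x => by linarith [N.le_one (1 - x)]
  le_one := fun x => by linarith [N.nonneg (1 - x)]
  zero := by simp [N.one]
  one := by simp [N.zero]
  th := by simp [N.th]
  th0 := by linarith [N.th1]
  th1 := by linarith [N.th0]
  below := fun x h0 h1 => by linarith [N.above (1 - x) (by linarith) (by linarith)]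
  above := fun x h0 h1 => by linarith [N.below (1 - x) (by linarith) (by linarith)]

/-- The wave operator. -/
noncomputable def T (q G : ℝ → ℝ) (ℓ : ℝ) (u : ℝ → ℝ) (x : ℝ) : ℝ := G (conv q u (x + ℓ))

section
variable {q : ℝ → ℝ} {R C : ℝ} {G : ℝ → ℝ} {θ : ℝ}

theorem T_adm (K : Ker q R C) (N : Non G θ) {u : ℝ → ℝ} (hu : Adm u) (ℓ : ℝ) : Adm (T q G ℓ u) where
  mono := fun x y h => N.mono ((K.adm hu).mono (by linarith))
  nonneg := fun x => N.nonneg _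
  le_one := fun x => N.le_one _

theorem T_mono (K : Ker q R C) (N : Non G θ) {u v : ℝ → ℝ} (hu : Adm u) (hv : Adm v)
    (h : ∀ x, u x ≤ v x) {ℓ ℓ' : ℝ} (hl : ℓ ≤ ℓ') (x : ℝ) : T q G ℓ u x ≤ T q G ℓ' v x :=
  N.mono ((K.conv_mono hu hv h _).trans ((K.adm hv).mono (by linarith)))

theorem T_shift (s ℓ : ℝ) (u : ℝ → ℝ) (x : ℝ) :
    T q G ℓ (fun x => u (x + s)) x = T q G ℓ u (x + s) := by
  simp only [T, conv_shift]; congr 2; ring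

theorem T_refl (K : Ker q R C) {u : ℝ → ℝ} (hu : Adm u) (ℓ x : ℝ) :
    T (fun z => q (-z)) (fun x => 1 - G (1 - x)) (-ℓ) (mirror u) x = 1 - T q G ℓ u (-x) := by
  simp only [T]
  rw [K.conv_refl hu]
  congr 2
  rw [sub_sub_cancel]; congr 1; ring

theorem adm_max {u v : ℝ → ℝ} (hu : Adm u) (hv : Adm v) : Adm (fun x => max (u x) (v x)) where
  mono := fun x y h => max_le_max (hu.mono h) (hv.mono h)
  nonneg := fun x => le_max_of_le_left (hu.nonneg x)
  le_one := fun x => max_le (hu.le_one x) (hv.le_one x)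

/-- Monotone iteration from below with obstacle `w`. -/
theorem iter_exists (K : Ker q R C) (N : Non G θ) {w : ℝ → ℝ} (hw : Adm w) (ℓ : ℝ) :
    ∃ (a : ℕ → ℝ → ℝ) (φ : ℝ → ℝ), a 0 = w ∧ (∀ n, Adm (a n)) ∧
      (∀ n x, a (n + 1) x = max (w x) (T q G ℓ (a n) x)) ∧
      (∀ n x, a n x ≤ a (n + 1) x) ∧ (∀ x, Tendsto (fun n => a n x) atTop (𝓝 (φ x))) ∧
      Adm φ ∧ (∀ x, φ x = max (w x) (T q G ℓ φ x)) ∧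
      (∀ v, Adm v → (∀ x, w x ≤ v x) → (∀ x, T q G ℓ v x ≤ v x) → ∀ x, φ x ≤ v x) := by
  let a : ℕ → ℝ → ℝ := fun n => Nat.rec w (fun _ b x => max (w x) (T q G ℓ b x)) n
  have ha0 : a 0 = w := rfl
  have ha1 : ∀ n x, a (n + 1) x = max (w x) (T q G ℓ (a n) x) := fun n x => rfl
  have had : ∀ n, Adm (a n) := by
    intro n
    induction n with
    | zero => exact hw
    | succ n ih => exact adm_max hw (T_adm K N ih ℓ)
  have hinc : ∀ n x, a n x ≤ a (n + 1) x := by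
    intro n
    induction n with
    | zero => intro x; rw [ha1, ha0]; exact le_max_left _ _
    | succ n ih =>
      intro x
      rw [ha1 (n + 1), ha1 n]
      exact max_le_max le_rfl (T_mono K N (had n) (had (n + 1)) ih le_rfl x)
  have hlim : ∀ x, Tendsto (fun n => a n x) atTop (𝓝 (⨆ n, a n x)) := fun x =>
    tendsto_atTop_ciSup (monotone_nat_of_le_succ fun n => hinc n x)
      ⟨1, by rintro _ ⟨n, rfl⟩; exact (had n).le_one x⟩
  have hφ : Adm (fun x => ⨆ n, a n x) :=
    ⟨fun x y h => le_of_tendsto_of_tendsto' (hlim x) (hlim y) fun n => (had n).mono h,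
      fun x => ge_of_tendsto' (hlim x) fun n => (had n).nonneg x,
      fun x => le_of_tendsto' (hlim x) fun n => (had n).le_one x⟩
  refine ⟨a, fun x => ⨆ n, a n x, ha0, had, ha1, hinc, hlim, hφ, ?_, ?_⟩
  · intro x
    refine tendsto_nhds_unique ((hlim x).comp (tendsto_add_atTop_nat 1)) ?_
    have h2 := (N.cont.tendsto _).comp (K.tendsto_conv had hlim (x + ℓ))
    exact (tendsto_const_nhds (x := w x)).max h2
  · intro v hv hwv hTv x
    refine le_of_tendsto' (hlim x) fun n => ?_
    revert x
    induction n with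
    | zero => exact hwv
    | succ n ih =>
      intro x
      rw [ha1]
      exact max_le (hwv x) ((T_mono K N (had n) hv ih le_rfl x).trans (hTv x))

end
section
variable {q : ℝ → ℝ} {R C : ℝ}

theorem Adm.intervalIntegrable {u : ℝ → ℝ} (hu : Adm u) (a b : ℝ) : IntervalIntegrable u volume a b :=
  hu.mono.intervalIntegrable

/-- Auxiliary potential. -/
noncomputable def pot (q u : ℝ → ℝ) (ℓ x : ℝ) : ℝ := ∫ z, q z * ∫ t in (ℓ - z)..0, u (x + t)

theorem pot_inner_cont {u : ℝ → ℝ} (hu : Adm u) (ℓ x : ℝ) :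
    Continuous (fun z => ∫ t in (ℓ - z)..0, u (x + t)) := by
  have h1 : ∀ a b, IntervalIntegrable (fun t => u (x + t)) volume a b := fun a b => by
    have := (hu.shift x).intervalIntegrable a b
    simpa [add_comm] using this
  have h2 := intervalIntegral.continuous_primitive h1 0
  have h3 : (fun z => ∫ t in (ℓ - z)..0, u (x + t)) = fun z => -∫ t in (0 : ℝ)..(ℓ - z), u (x + t) := by
    ext z; rw [intervalIntegral.integral_symm]
  rw [h3]
  exact (h2.comp (continuous_const.sub continuous_id)).neg

theorem pot_inner_bound {u : ℝ → ℝ} (hu : Adm u) (ℓ x z : ℝ) :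
    ‖∫ t in (ℓ - z)..0, u (x + t)‖ ≤ |ℓ - z| := by
  have := intervalIntegral.norm_integral_le_of_norm_le_const (a := ℓ - z) (b := 0) (C := 1)
    (f := fun t => u (x + t)) (fun t _ => by
      rw [Real.norm_eq_abs, abs_of_nonneg (hu.nonneg _)]; exact hu.le_one _)
  simpa [abs_sub_comm] using this

theorem Ker.integrable_bound (K : Ker q R C) (ℓ : ℝ) : Integrable (fun z => q z * |ℓ - z|) := by
  have hc := K.cont
  refine Continuous.integrable_of_hasCompactSupport (by fun_prop) ?_
  exact K.hcs.mul_right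

theorem pot_integrable (K : Ker q R C) {u : ℝ → ℝ} (hu : Adm u) (ℓ x : ℝ) :
    Integrable (fun z => q z * ∫ t in (ℓ - z)..0, u (x + t)) := by
  exact Continuous.integrable_of_hasCompactSupport (K.cont.mul (pot_inner_cont hu ℓ x)) K.hcs.mul_right

theorem pot_tendsto (K : Ker q R C) {u : ℝ → ℝ} (hu : Adm u) (ℓ : ℝ) {l : Filter ℝ}
    [l.IsCountablyGenerated] {b : ℝ} (h : ∀ t, Tendsto (fun x => u (x + t)) l (𝓝 b)) :
    Tendsto (pot q u ℓ) l (𝓝 (b * ((∫ z, z * q z) - ℓ))) := by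
  have e : b * ((∫ z, z * q z) - ℓ) = ∫ z, q z * ((z - ℓ) * b) := by
    have hz : Integrable (fun z => z * q z) :=
      Continuous.integrable_of_hasCompactSupport (continuous_id.mul K.cont) K.hcs.mul_left
    have : (fun z => q z * ((z - ℓ) * b)) = fun z => b * (z * q z - ℓ * q z) := by ext z; ring
    rw [this, integral_const_mul, integral_sub hz (K.integrable.const_mul ℓ), integral_const_mul,
      K.int_one, mul_one]
  rw [e]
  refine tendsto_integral_filter_of_dominated_convergence (fun z => q z * |ℓ - z|) ?_ ?_
    (K.integrable_bound ℓ) ?_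
  · exact Eventually.of_forall fun x => (pot_integrable K hu ℓ x).aestronglyMeasurable
  · refine Eventually.of_forall fun x => Eventually.of_forall fun z => ?_
    rw [norm_mul, Real.norm_eq_abs, abs_of_nonneg (K.nonneg z)]
    exact mul_le_mul_of_nonneg_left (pot_inner_bound hu ℓ x z) (K.nonneg z)
  · refine Eventually.of_forall fun z => Tendsto.const_mul _ ?_
    have e2 : (z - ℓ) * b = ∫ t in (ℓ - z)..0, b := by
      rw [intervalIntegral.integral_const, smul_eq_mul]; ring
    rw [e2]
    refine intervalIntegral.tendsto_integral_filter_of_dominated_convergence (fun _ => 1) ?_ ?_ ?_ ?_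
    · refine Eventually.of_forall fun x => ?_
      exact (hu.mono.measurable.comp (measurable_const.add measurable_id)).aestronglyMeasurable
    · refine Eventually.of_forall fun x => Eventually.of_forall fun t _ => ?_
      rw [Real.norm_eq_abs, abs_of_nonneg (hu.nonneg _)]; exact hu.le_one _
    · exact intervalIntegrable_const
    · exact Eventually.of_forall fun t _ => h t

theorem pot_diff (K : Ker q R C) {u : ℝ → ℝ} (hu : Adm u) (ℓ : ℝ) {A B : ℝ} (hAB : A ≤ B) :
    ∫ x in A..B, (u x - conv q u (x + ℓ)) = pot q u ℓ B - pot q u ℓ A := by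
  have h1 : ∀ x, u x - conv q u (x + ℓ) = ∫ z, q z * (u x - u (x + ℓ - z)) := by
    intro x
    simp only [mul_sub]
    rw [integral_sub (K.integrable.mul_const _) (K.integrable_mul hu _), integral_mul_const,
      K.int_one, one_mul]
    rfl
  simp only [h1]
  rw [intervalIntegral.integral_of_le hAB, integral_integral_swap]
  · rw [pot, pot, ← integral_sub (pot_integrable K hu ℓ B) (pot_integrable K hu ℓ A)]
    congr 1; ext z
    rw [integral_const_mul, ← mul_sub, ← intervalIntegral.integral_of_le hAB]
    congr 1
    have hsh : ∀ a b, IntervalIntegrable (fun x => u (x + ℓ - z)) volume a b := fun a b => by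
      have := (hu.shift (ℓ - z)).intervalIntegrable a b
      simpa [add_sub_assoc] using this
    rw [intervalIntegral.integral_sub (hu.intervalIntegrable A B) (hsh A B)]
    have e1 : ∫ x in A..B, u (x + ℓ - z) = ∫ x in (A + (ℓ - z))..(B + (ℓ - z)), u x := by
      rw [← intervalIntegral.integral_comp_add_right]; simp only [add_sub_assoc]
    have e2 : ∀ y, ∫ t in (ℓ - z)..0, u (y + t) = ∫ x in (y + (ℓ - z))..y, u x := by
      intro y
      rw [intervalIntegral.integral_comp_add_left, add_zero]
    rw [e1, e2, e2, intervalIntegral.integral_interval_sub_interval_comm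
      (hu.intervalIntegrable _ _) (hu.intervalIntegrable _ _) (hu.intervalIntegrable _ _),
      intervalIntegral.integral_symm (A + (ℓ - z)) A, intervalIntegral.integral_symm (B + (ℓ - z)) B]
    ring
  · have hq : Integrable (fun p : ℝ × ℝ => q p.2) ((volume.restrict (Set.Ioc A B)).prod volume) :=
      K.integrable.comp_snd _
    refine hq.mul_bdd (c := 1) ?_ ?_
    · refine Measurable.aestronglyMeasurable ?_
      have hm := hu.mono.measurable
      exact (hm.comp measurable_fst).sub
        (hm.comp ((measurable_fst.add measurable_const).sub measurable_snd))
    · refine Eventually.of_forall fun p => ?_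
      rw [Real.norm_eq_abs, abs_le]
      constructor <;> linarith [hu.nonneg p.1, hu.le_one p.1, hu.nonneg (p.1 + ℓ - p.2),
        hu.le_one (p.1 + ℓ - p.2)]

theorem mean_super (K : Ker q R C) {u : ℝ → ℝ} (hu : Adm u) {ℓ a b : ℝ}
    (ha : Tendsto u atBot (𝓝 a)) (hb : Tendsto u atTop (𝓝 b)) (hab : a < b)
    (h : ∀ x, conv q u (x + ℓ) ≤ u x) :
    ℓ ≤ ∫ z, z * q z ∧ (ℓ = ∫ z, z * q z → Continuous u → ∀ x, conv q u (x + ℓ) = u x) := by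
  have hmono : Monotone (pot q u ℓ) := by
    intro A B hAB
    have h1 := pot_diff K hu ℓ hAB
    have h2 : 0 ≤ ∫ x in A..B, (u x - conv q u (x + ℓ)) :=
      intervalIntegral.integral_nonneg hAB fun x _ => sub_nonneg.mpr (h x)
    linarith
  have hT := pot_tendsto K hu ℓ (l := atTop) (b := b)
    fun t => hb.comp (tendsto_atTop_add_const_right atTop t tendsto_id)
  have hB := pot_tendsto K hu ℓ (l := atBot) (b := a)
    fun t => ha.comp (tendsto_atBot_add_const_right atBot t tendsto_id)
  have h1 : ∀ x, a * ((∫ z, z * q z) - ℓ) ≤ pot q u ℓ x := fun x => hmono.le_of_tendsto hB x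
  have h2 : ∀ x, pot q u ℓ x ≤ b * ((∫ z, z * q z) - ℓ) := fun x => hmono.ge_of_tendsto hT x
  refine ⟨?_, fun hl hc x => ?_⟩
  · have := (h1 0).trans (h2 0)
    by_contra hcon
    push Not at hcon
    nlinarith
  · rw [← hl] at h1 h2
    simp only [sub_self, mul_zero] at h1 h2
    have h0 : ∀ x, pot q u ℓ x = 0 := fun x => le_antisymm (h2 x) (h1 x)
    have hDc : Continuous (fun x => u x - conv q u (x + ℓ)) :=
      hc.sub ((K.conv_continuous hu).comp (continuous_id.add continuous_const))
    by_contra hne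
    have hpos : 0 < u x - conv q u (x + ℓ) := sub_pos.mpr (lt_of_le_of_ne (h x) hne)
    have := intervalIntegral.integral_pos (a := x) (b := x + 1) (by linarith) hDc.continuousOn
      (fun y _ => sub_nonneg.mpr (h y)) ⟨x, ⟨le_rfl, by linarith⟩, hpos⟩
    rw [pot_diff K hu ℓ (by linarith), h0, h0] at this
    simp at this

theorem mirror_bot {u : ℝ → ℝ} {a : ℝ} (h : Tendsto u atTop (𝓝 a)) :
    Tendsto (mirror u) atBot (𝓝 (1 - a)) :=
  tendsto_const_nhds.sub (h.comp tendsto_neg_atBot_atTop)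

theorem mirror_top {u : ℝ → ℝ} {a : ℝ} (h : Tendsto u atBot (𝓝 a)) :
    Tendsto (mirror u) atTop (𝓝 (1 - a)) :=
  tendsto_const_nhds.sub (h.comp tendsto_neg_atTop_atBot)

theorem mean_reflect (q : ℝ → ℝ) : ∫ z, z * q (-z) = -∫ z, z * q z := by
  rw [← integral_neg_eq_self, ← integral_neg]
  congr 1; ext z; simp

theorem mean_sub (K : Ker q R C) {u : ℝ → ℝ} (hu : Adm u) {ℓ a b : ℝ}
    (ha : Tendsto u atBot (𝓝 a)) (hb : Tendsto u atTop (𝓝 b)) (hab : a < b)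
    (h : ∀ x, u x ≤ conv q u (x + ℓ)) : ∫ z, z * q z ≤ ℓ := by
  have := (mean_super K.reflect hu.mirror (ℓ := -ℓ) (mirror_bot hb) (mirror_top ha) (by linarith)
    (fun x => by
      rw [K.conv_refl hu]
      have := h (-x)
      have e : -(x + -ℓ) = -x + ℓ := by ring
      rw [e]
      simp only [mirror]; linarith)).1
  rw [mean_reflect] at this
  linarith

end
/-- Existence of a supersolution with speed `ℓ`. -/
def IsSup (q G : ℝ → ℝ) (ℓ : ℝ) : Prop :=
  ∃ (v : ℝ → ℝ) (X : ℝ), Adm v ∧ (∀ x, X < x → v x = 1) ∧ Tendsto v atBot (𝓝 0) ∧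
    ∀ x, T q G ℓ v x ≤ v x

/-- Existence of a subsolution with speed `ℓ`. -/
def IsSb (q G : ℝ → ℝ) (ℓ : ℝ) : Prop :=
  ∃ (w : ℝ → ℝ) (Y : ℝ), Adm w ∧ (∀ x, x < Y → w x = 0) ∧ Tendsto w atTop (𝓝 1) ∧
    ∀ x, w x ≤ T q G ℓ w x

/-- Heaviside function. -/
noncomputable def Hv (x : ℝ) : ℝ := if 0 < x then 1 else 0

theorem Hv_adm : Adm Hv where
  mono := fun x y h => by
    simp only [Hv]; split_ifs <;> first | linarith | norm_num
  nonneg := fun x => by simp only [Hv]; split_ifs <;> norm_num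
  le_one := fun x => by simp only [Hv]; split_ifs <;> norm_num

theorem tendsto_one_of_eq {u : ℝ → ℝ} {X : ℝ} (h : ∀ x, X < x → u x = 1) : Tendsto u atTop (𝓝 1) :=
  tendsto_const_nhds.congr' ((eventually_gt_atTop X).mono fun x hx => (h x hx).symm)

theorem tendsto_zero_of_eq {u : ℝ → ℝ} {X : ℝ} (h : ∀ x, x < X → u x = 0) : Tendsto u atBot (𝓝 0) :=
  tendsto_const_nhds.congr' ((eventually_lt_atBot X).mono fun x hx => (h x hx).symm)

section
variable {q : ℝ → ℝ} {R C : ℝ} {G : ℝ → ℝ} {θ : ℝ}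

theorem isSup_reflect (K : Ker q R C) {ℓ : ℝ} 
    (h : IsSup (fun z => q (-z)) (fun x => 1 - G (1 - x)) (-ℓ)) : IsSb q G ℓ := by
  obtain ⟨v, X, hv, h1, h0, hT⟩ := h
  refine ⟨mirror v, -X, hv.mirror, fun x hx => ?_, ?_, fun x => ?_⟩
  · simp [mirror, h1 (-x) (by linarith)]
  · simpa using mirror_top h0
  · have := T_refl (G := G) K hv.mirror ℓ (-x)
    rw [Ker.refl_refl, neg_neg] at this
    have h2 := hT (-x)
    rw [this] at h2
    have e : mirror v x = 1 - v (-x) := rfl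
    linarith

theorem isSb_reflect (K : Ker q R C) {ℓ : ℝ} 
    (h : IsSb (fun z => q (-z)) (fun x => 1 - G (1 - x)) (-ℓ)) : IsSup q G ℓ := by
  obtain ⟨v, X, hv, h1, h0, hT⟩ := h
  refine ⟨mirror v, -X, hv.mirror, fun x hx => ?_, ?_, fun x => ?_⟩
  · simp [mirror, h1 (-x) (by linarith)]
  · simpa using mirror_bot h0
  · have := T_refl (G := G) K hv.mirror ℓ (-x)
    rw [Ker.refl_refl, neg_neg] at this
    have h2 := hT (-x)
    rw [this] at h2
    have e : mirror v x = 1 - v (-x) := rfl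
    linarith

theorem dich1 (K : Ker q R C) (N : Non G θ) {ε : ℝ} (hε : 0 < ε) (hflat : ∀ x, 1 - ε ≤ x → G x = 1)
    (ℓ : ℝ) : IsSup q G ℓ ∨ IsSb q G ℓ ∨ ℓ ≤ ∫ z, z * q z := by
  obtain ⟨a, φ, ha0, ha, ha1, hinc, hlim, hφ, hφeq, -⟩ := iter_exists K N Hv_adm ℓ
  have hφ1 : ∀ x, 0 < x → φ x = 1 := fun x hx => by
    refine le_antisymm (hφ.le_one x) ?_
    rw [hφeq x]; exact le_max_of_le_left (by simp [Hv, hx])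
  have hφs : ∀ x, T q G ℓ φ x ≤ φ x := fun x => by
    conv_rhs => rw [hφeq x]
    exact le_max_right _ _
  have hφ0 : ∀ x, x ≤ 0 → φ x = T q G ℓ φ x := fun x hx => by
    rw [hφeq x]
    have : Hv x = 0 := by simp [Hv, not_lt.mpr hx]
    rw [this]
    exact max_eq_right (N.nonneg _)
  obtain ⟨l, hl, hl0, hle⟩ := hφ.exists_bot
  have hfix : G l = l := by
    have h1 : Tendsto (T q G ℓ φ) atBot (𝓝 (G l)) :=
      (N.cont.tendsto l).comp (K.tendsto_bot hφ hl ℓ)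
    refine tendsto_nhds_unique h1 (hl.congr' ?_)
    exact (eventually_le_atBot 0).mono fun x hx => hφ0 x hx
  rcases N.fix hfix with h | h | h
  · left
    exact ⟨φ, 0, hφ, hφ1, h ▸ hl, hφs⟩
  · right; right
    refine (mean_super K hφ hl (tendsto_one_of_eq hφ1) (h ▸ N.th1) fun x => ?_).1
    refine le_trans (N.ge ?_ ((K.adm hφ).le_one _)) (hφs x)
    exact K.le_conv hφ fun z _ => h ▸ hle _
  · right; left
    have h1 : φ (-(|ℓ| + R)) = 1 := le_antisymm (hφ.le_one _) (h ▸ hle _)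
    have h2 := hlim (-(|ℓ| + R))
    rw [h1] at h2
    obtain ⟨n, hn⟩ := (h2.eventually (lt_mem_nhds (show 1 - ε < 1 by linarith))).exists
    have hz : ∀ n, ∃ Y, ∀ x, x < Y → a n x = 0 := by
      intro n
      induction n with
      | zero => exact ⟨0, fun x hx => by rw [ha0]; simp [Hv, not_lt.mpr hx.le]⟩
      | succ n ih =>
        obtain ⟨Y, hY⟩ := ih
        refine ⟨min 0 (Y - ℓ - R), fun x hx => ?_⟩
        have hx1 := lt_of_lt_of_le hx (min_le_left _ _)
        have hx2 := lt_of_lt_of_le hx (min_le_right _ _)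
        rw [ha1]
        have e1 : Hv x = 0 := by simp [Hv, not_lt.mpr hx1.le]
        have e2 : conv q (a n) (x + ℓ) = 0 := by
          refine le_antisymm ?_ ((K.adm (ha n)).nonneg _)
          exact (K.le (ha n) _).trans (hY _ (by linarith)).le
        rw [e1, T, e2, N.zero, max_self]
    obtain ⟨Y, hY⟩ := hz n
    refine ⟨a n, Y, ha n, hY, ?_, fun x => ?_⟩
    · refine tendsto_one_of_eq (X := 0) fun x hx => le_antisymm ((ha n).le_one x) ?_
      have h3 : ∀ m, a 0 x ≤ a m x := fun m =>
        monotone_nat_of_le_succ (f := fun m => a m x) (fun m => hinc m x) (Nat.zero_le m)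
      refine le_trans ?_ (h3 n)
      rw [ha0]; simp [Hv, hx]
    · by_cases hx : 0 < x
      · have : T q G ℓ (a n) x = 1 := by
          refine hflat _ (hn.le.trans (le_trans ((ha n).mono ?_) (K.ge (ha n) (x + ℓ))))
          linarith [neg_abs_le ℓ]
        rw [this]; exact (ha n).le_one x
      · have h3 := hinc n x
        rw [ha1] at h3
        have e1 : Hv x = 0 := by simp [Hv, hx]
        rw [e1, max_eq_right (show 0 ≤ T q G ℓ (a n) x from N.nonneg _)] at h3
        exact h3

theorem dich (K : Ker q R C) (N : Non G θ) {ε : ℝ} (hε : 0 < ε) (hflat : ∀ x, 1 - ε ≤ x → G x = 1)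
    (hflat0 : ∀ x, x ≤ ε → G x = 0) {ℓ : ℝ} (hl : ℓ ≠ ∫ z, z * q z) : IsSup q G ℓ ∨ IsSb q G ℓ := by
  rcases dich1 K N hε hflat ℓ with h | h | h
  · exact Or.inl h
  · exact Or.inr h
  rcases dich1 K.reflect N.reflect hε
    (fun x hx => by simp [hflat0 (1 - x) (by linarith)]) (-ℓ) with h' | h' | h'
  · exact Or.inr (isSup_reflect K h')
  · exact Or.inl (isSb_reflect K h')
  · rw [mean_reflect] at h'
    exact absurd (le_antisymm h (by linarith)) hl

theorem isSup_left (K : Ker q R C) (N : Non G θ) : IsSup q G (-R) := by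
  refine ⟨Hv, 0, Hv_adm, fun x hx => by simp [Hv, hx],
    tendsto_zero_of_eq (X := 0) fun x hx => by simp [Hv, not_lt.mpr hx.le], fun x => ?_⟩
  by_cases hx : 0 < x
  · simp only [Hv, hx, if_true]; exact N.le_one _
  · have h : conv q Hv (x + -R) ≤ 0 := (K.le Hv_adm _).trans (by simp [Hv, hx])
    have := N.mono h
    rw [N.zero] at this
    exact this.trans (Hv_adm.nonneg x)

theorem isSb_right (K : Ker q R C) (N : Non G θ) : IsSb q G R := by
  refine isSup_reflect K ?_
  exact isSup_left K.reflect N.reflect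

theorem isSup_anti (K : Ker q R C) (N : Non G θ) {ℓ ℓ' : ℝ} (hl : ℓ ≤ ℓ') (h : IsSup q G ℓ') :
    IsSup q G ℓ := by
  obtain ⟨v, X, hv, h1, h0, hT⟩ := h
  exact ⟨v, X, hv, h1, h0, fun x => (T_mono K N hv hv (fun _ => le_rfl) hl x).trans (hT x)⟩

theorem speeds (K : Ker q R C) (N : Non G θ) {ε : ℝ} (hε : 0 < ε)
    (hflat : ∀ x, 1 - ε ≤ x → G x = 1)
    (hflat0 : ∀ x, x ≤ ε → G x = 0) {h : ℝ} (hh : 0 < h) :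
    ∃ ℓ ℓ', ℓ ≤ ℓ' ∧ ℓ' ≤ ℓ + h ∧ |ℓ| ≤ R + h ∧ IsSup q G ℓ ∧ IsSb q G ℓ' := by
  by_cases hR : IsSup q G R
  · exact ⟨R, R, le_rfl, by linarith, by rw [abs_of_nonneg K.Rnn]; linarith, hR, isSb_right K N⟩
  have hub : ∀ ℓ ∈ {ℓ | IsSup q G ℓ}, ℓ ≤ R := fun ℓ hl => by
    by_contra hc
    exact hR (isSup_anti K N (not_le.mp hc).le hl)
  have hbd : BddAbove {ℓ | IsSup q G ℓ} := ⟨R, hub⟩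
  have hne : {ℓ | IsSup q G ℓ}.Nonempty := ⟨-R, isSup_left K N⟩
  have hs1 : sSup {ℓ | IsSup q G ℓ} ≤ R := csSup_le hne hub
  have hs2 : -R ≤ sSup {ℓ | IsSup q G ℓ} := le_csSup hbd (isSup_left K N)
  set s := sSup {ℓ | IsSup q G ℓ} with hs
  obtain ⟨ℓ, hℓ, hℓs⟩ := exists_lt_of_lt_csSup hne (show s - h / 2 < s by linarith)
  have hℓs' : ℓ ≤ s := le_csSup hbd hℓ
  have : ∃ ℓ', s < ℓ' ∧ ℓ' < s + h / 2 ∧ ℓ' ≠ ∫ z, z * q z := by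
    by_cases hm : s + h / 4 = ∫ z, z * q z
    · exact ⟨s + h / 8, by linarith, by linarith, fun h' => by linarith⟩
    · exact ⟨s + h / 4, by linarith, by linarith, hm⟩
  obtain ⟨ℓ', h1, h2, h3⟩ := this
  refine ⟨ℓ, ℓ', by linarith, by linarith, ?_, hℓ, ?_⟩
  · rw [abs_le]; constructor <;> linarith
  · rcases dich K N hε hflat hflat0 h3 with h4 | h4
    · exact absurd (le_csSup hbd h4) (not_le.mpr h1)
    · exact h4

theorem sandwich (K : Ker q R C) (N : Non G θ) {ℓ ℓ' : ℝ} (hl : ℓ ≤ ℓ') (h1 : IsSup q G ℓ)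
    (h2 : IsSb q G ℓ') : ∃ φ, Adm φ ∧ Tendsto φ atBot (𝓝 0) ∧ Tendsto φ atTop (𝓝 1) ∧
      (∀ x, T q G ℓ φ x ≤ φ x) ∧ ∀ x, φ x ≤ T q G ℓ' φ x := by
  obtain ⟨v, X, hv, hv1, hv0, hvT⟩ := h1
  obtain ⟨w0, Y, hw0, hw0z, hw01, hw0T⟩ := h2
  obtain ⟨w, hw, hwz, hw1, hwT⟩ : ∃ w, Adm w ∧ (∀ x, x ≤ X → w x = 0) ∧ Tendsto w atTop (𝓝 1) ∧
      ∀ x, w x ≤ T q G ℓ' w x := by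
    refine ⟨fun x => w0 (x + (Y - X - 1)), hw0.shift _, fun x hx => hw0z _ (by linarith),
      hw01.comp (tendsto_atTop_add_const_right atTop _ tendsto_id), fun x => ?_⟩
    rw [T_shift]; exact hw0T _
  have hwv : ∀ x, w x ≤ v x := fun x => by
    by_cases hx : X < x
    · rw [hv1 x hx]; exact hw.le_one x
    · rw [hwz x (not_lt.mp hx)]; exact hv.nonneg x
  obtain ⟨a, φ, -, -, -, -, -, hφ, hφeq, hφv⟩ := iter_exists K N hw ℓ
  have hwφ : ∀ x, w x ≤ φ x := fun x => by rw [hφeq x]; exact le_max_left _ _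
  have hφv' := hφv v hv hwv hvT
  refine ⟨φ, hφ, ?_, ?_, fun x => ?_, fun x => ?_⟩
  · exact tendsto_of_tendsto_of_tendsto_of_le_of_le tendsto_const_nhds hv0 hφ.nonneg hφv'
  · exact tendsto_of_tendsto_of_tendsto_of_le_of_le hw1 tendsto_const_nhds hwφ hφ.le_one
  · conv_rhs => rw [hφeq x]
    exact le_max_right _ _
  · rw [hφeq x]
    exact max_le ((hwT x).trans (T_mono K N hw hφ hwφ le_rfl x))
      (T_mono K N hφ hφ (fun _ => le_rfl) hl x)

end
section
variable {q : ℝ → ℝ} {R C : ℝ} {p : ℝ → ℝ} {θ : ℝ}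

theorem conv_subseq (K : Ker q R C) {φ : ℕ → ℝ → ℝ} (hφ : ∀ k, Adm (φ k)) :
    ∃ (s : ℕ → ℕ) (ψ : ℝ → ℝ), StrictMono s ∧
      ∀ x, Tendsto (fun k => conv q (φ (s k)) x) atTop (𝓝 (ψ x)) := by
  let F : ℕ → (ℚ → Set.Icc (0 : ℝ) 1) := fun k r =>
    ⟨conv q (φ k) r, (K.adm (hφ k)).nonneg _, (K.adm (hφ k)).le_one _⟩
  obtain ⟨a, s, hs, ha⟩ := CompactSpace.tendsto_subseq F
  have hr : ∀ r : ℚ, Tendsto (fun k => conv q (φ (s k)) r) atTop (𝓝 (a r : ℝ)) := fun r =>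
    (continuous_subtype_val.tendsto _).comp (tendsto_pi_nhds.mp ha r)
  have hx : ∀ x, ∃ y, Tendsto (fun k => conv q (φ (s k)) x) atTop (𝓝 y) := by
    intro x
    refine cauchySeq_tendsto_of_complete ?_
    rw [Metric.cauchySeq_iff]
    intro ε hε
    have hC : 0 < C + 1 := by linarith [K.Cnn]
    obtain ⟨r, hr1, hr2⟩ := exists_rat_btwn (show x < x + ε / 3 / (C + 1) by
      have : 0 < ε / 3 / (C + 1) := by positivity
      linarith)
    have hb : ∀ k, |conv q (φ k) x - conv q (φ k) r| < ε / 3 := fun k => by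
      have h1 := K.lip _ (hφ k) x r
      have h2 : |x - r| < ε / 3 / (C + 1) := by rw [abs_lt]; constructor <;> linarith
      have h3 := (lt_div_iff₀ hC).mp h2
      nlinarith [abs_nonneg (x - r)]
    obtain ⟨n, hn⟩ := (Metric.cauchySeq_iff.mp (hr r).cauchySeq) (ε / 3) (by positivity)
    refine ⟨n, fun i hi j hj => ?_⟩
    have h1 := hn i hi j hj
    rw [Real.dist_eq] at h1 ⊢
    have h2 := hb (s i)
    have h3 := hb (s j)
    rw [abs_lt] at *
    constructor <;> linarith [h1.1, h1.2, h2.1, h2.2, h3.1, h3.2]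
  choose ψ hψ using hx
  exact ⟨s, ψ, hs, hψ⟩

theorem limit_wave (K : Ker q R C) (N : Non p θ) {G : ℕ → ℝ → ℝ} {d : ℕ → ℝ}
    (hd : Tendsto d atTop (𝓝 0)) (hG : ∀ k x, |G k x - p x| ≤ d k)
    {l l' : ℕ → ℝ} {ℓ c : ℝ} (hl : Tendsto l atTop (𝓝 ℓ)) (hl' : Tendsto l' atTop (𝓝 ℓ))
    {φ : ℕ → ℝ → ℝ} (hφ : ∀ k, Adm (φ k)) (h1 : ∀ k x, T q (G k) (l k) (φ k) x ≤ φ k x)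
    (h2 : ∀ k x, φ k x ≤ T q (G k) (l' k) (φ k) x) (hc : ∀ k, conv q (φ k) 0 = c) :
    ∃ φ, Adm φ ∧ (∀ x, φ x = T q p ℓ φ x) ∧ conv q φ 0 = c := by
  obtain ⟨s, ψ, hs, hψ⟩ := conv_subseq K hφ
  have hst := hs.tendsto_atTop
  have key : ∀ m : ℕ → ℝ, Tendsto m atTop (𝓝 ℓ) → ∀ x,
      Tendsto (fun k => T q (G (s k)) (m (s k)) (φ (s k)) x) atTop (𝓝 (p (ψ (x + ℓ)))) := by
    intro m hm x
    have e1 : Tendsto (fun k => conv q (φ (s k)) (x + m (s k))) atTop (𝓝 (ψ (x + ℓ))) := by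
      have e2 : Tendsto (fun k => conv q (φ (s k)) (x + m (s k)) - conv q (φ (s k)) (x + ℓ))
          atTop (𝓝 0) := by
        refine squeeze_zero_norm (a := fun k => C * |m (s k) - ℓ|) (fun k => ?_) ?_
        · have := K.lip _ (hφ (s k)) (x + m (s k)) (x + ℓ)
          rwa [add_sub_add_left_eq_sub] at this
        · have := (((hm.comp hst).sub_const ℓ).abs).const_mul C
          simpa using this
      simpa using e2.add (hψ (x + ℓ))
    have e3 := (N.cont.tendsto _).comp e1
    have e4 : Tendsto (fun k => T q (G (s k)) (m (s k)) (φ (s k)) x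
        - p (conv q (φ (s k)) (x + m (s k)))) atTop (𝓝 0) :=
      squeeze_zero_norm (fun k => hG _ _) (hd.comp hst)
    simpa using e4.add e3
  have hlim : ∀ x, Tendsto (fun k => φ (s k) x) atTop (𝓝 (p (ψ (x + ℓ)))) := fun x =>
    tendsto_of_tendsto_of_tendsto_of_le_of_le (key l hl x) (key l' hl' x)
      (fun k => h1 _ _) (fun k => h2 _ _)
  have hconv : ∀ x, conv q (fun x => p (ψ (x + ℓ))) x = ψ x := fun x =>
    tendsto_nhds_unique (K.tendsto_conv (fun k => hφ (s k)) hlim x) (hψ x)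
  refine ⟨fun x => p (ψ (x + ℓ)), ⟨fun x y h => ?_, fun x => N.nonneg _, fun x => N.le_one _⟩,
    fun x => ?_, ?_⟩
  · exact le_of_tendsto_of_tendsto' (hlim x) (hlim y) fun k => (hφ _).mono h
  · rw [T, hconv]
  · rw [hconv]
    exact tendsto_nhds_unique (hψ 0) (tendsto_const_nhds.congr fun k => (hc _).symm)

/-- Stretched nonlinearity. -/
noncomputable def Gs (p : ℝ → ℝ) (θ d x : ℝ) : ℝ := max 0 (min 1 (θ + (1 + d) * (p x - θ)))

theorem Gs_non (N : Non p θ) {d : ℝ} (hd : 0 ≤ d) : Non (Gs p θ d) θ where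
  cont := by have := N.cont; unfold Gs; fun_prop
  mono := fun x y h => by
    have := N.mono h
    simp only [Gs]; gcongr
  nonneg := fun x => le_max_left _ _
  le_one := fun x => max_le zero_le_one (min_le_left _ _)
  zero := by
    have := N.th0
    rw [Gs, N.zero]
    refine max_eq_left (min_le_of_right_le ?_)
    nlinarith
  one := by
    have := N.th1
    rw [Gs, N.one, min_eq_left (by nlinarith)]; norm_num
  th := by
    rw [Gs, N.th, sub_self, mul_zero, add_zero, min_eq_right N.th1.le, max_eq_right N.th0.le]
  th0 := N.th0
  th1 := N.th1
  below := fun x h0 h1 => by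
    have := N.below x h0 h1
    refine max_lt h0 (min_lt_of_right_lt ?_)
    nlinarith
  above := fun x h0 h1 => by
    have := N.above x h0 h1
    refine lt_max_of_lt_right (lt_min h1 ?_)
    nlinarith

theorem Gs_close (N : Non p θ) {d : ℝ} (hd : 0 ≤ d) (x : ℝ) : |Gs p θ d x - p x| ≤ d := by
  have h0 := N.nonneg x
  have h1 := N.le_one x
  have t0 := N.th0
  have t1 := N.th1
  have h3 : d * (p x - θ) ≤ d := by nlinarith
  have h4 : -d ≤ d * (p x - θ) := by nlinarith
  rw [abs_le, Gs]
  constructor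
  · have : p x - d ≤ max 0 (min 1 (θ + (1 + d) * (p x - θ))) :=
      le_max_of_le_right (le_min (by linarith) (by linarith))
    linarith
  · have : max 0 (min 1 (θ + (1 + d) * (p x - θ))) ≤ p x + d :=
      max_le (by linarith) (min_le_of_right_le (by linarith))
    linarith

theorem Gs_flat (N : Non p θ) {d : ℝ} (hd : 0 < d) :
    ∃ ε > 0, (∀ x, 1 - ε ≤ x → Gs p θ d x = 1) ∧ ∀ x, x ≤ ε → Gs p θ d x = 0 := by
  have NG := Gs_non N hd.le
  have hc : Continuous (fun x => θ + (1 + d) * (p x - θ)) := by have := N.cont; fun_prop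
  have h0 : ∀ᶠ x in 𝓝 (0 : ℝ), θ + (1 + d) * (p x - θ) < 0 := by
    refine hc.continuousAt.eventually_lt continuousAt_const ?_
    rw [N.zero]; nlinarith [N.th0]
  have h1 : ∀ᶠ x in 𝓝 (1 : ℝ), 1 < θ + (1 + d) * (p x - θ) := by
    refine continuousAt_const.eventually_lt hc.continuousAt ?_
    rw [N.one]; nlinarith [N.th1]
  obtain ⟨e0, he0, h0⟩ := Metric.eventually_nhds_iff.mp h0
  obtain ⟨e1, he1, h1⟩ := Metric.eventually_nhds_iff.mp h1
  have hm : 0 < min e0 e1 := lt_min he0 he1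
  have hm0 := min_le_left e0 e1
  have hm1 := min_le_right e0 e1
  refine ⟨min e0 e1 / 2, by linarith, fun x hx => ?_, fun x hx => ?_⟩
  · have h2 := @h1 (1 - min e0 e1 / 2) (by
      rw [Real.dist_eq, abs_lt]; constructor <;> linarith)
    have h3 := NG.mono hx
    refine le_antisymm (NG.le_one x) (le_trans ?_ h3)
    exact le_max_of_le_right (le_min le_rfl h2.le)
  · have h2 := @h0 (min e0 e1 / 2) (by
      rw [Real.dist_eq, abs_lt]; constructor <;> linarith)
    have h3 := NG.mono hx
    refine le_antisymm (le_trans h3 ?_) (NG.nonneg x)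
    exact max_le le_rfl (min_le_of_right_le h2.le)

theorem normalized (K : Ker q R C) {G : ℝ → ℝ} {φ : ℝ → ℝ} {ℓ ℓ' c : ℝ} (hφ : Adm φ)
    (h0 : Tendsto φ atBot (𝓝 0)) (h1 : Tendsto φ atTop (𝓝 1))
    (hs : ∀ x, T q G ℓ φ x ≤ φ x) (hs' : ∀ x, φ x ≤ T q G ℓ' φ x) (hc0 : 0 < c) (hc1 : c < 1) :
    ∃ φ, Adm φ ∧ (∀ x, T q G ℓ φ x ≤ φ x) ∧ (∀ x, φ x ≤ T q G ℓ' φ x) ∧ conv q φ 0 = c := by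
  have hb := K.tendsto_bot hφ h0 0
  have ht := K.tendsto_top hφ h1 0
  simp only [add_zero] at hb ht
  obtain ⟨a, ha⟩ := (hb.eventually (gt_mem_nhds hc0)).exists
  obtain ⟨b, hb⟩ := (ht.eventually (lt_mem_nhds hc1)).exists
  obtain ⟨ξ, hξ⟩ := mem_range_of_exists_le_of_exists_ge (K.conv_continuous hφ)
    ⟨a, ha.le⟩ ⟨b, hb.le⟩
  refine ⟨fun x => φ (x + ξ), hφ.shift ξ, fun x => ?_, fun x => ?_, ?_⟩
  · rw [T_shift]; exact hs _
  · rw [T_shift]; exact hs' _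
  · rw [conv_shift, zero_add]; exact hξ

theorem wave_limits (K : Ker q R C) (N : Non p θ) {φ : ℝ → ℝ} {ℓ : ℝ} (hφ : Adm φ)
    (he : ∀ x, φ x = T q p ℓ φ x) : ∃ a b, Tendsto φ atBot (𝓝 a) ∧ Tendsto φ atTop (𝓝 b) ∧
      p a = a ∧ p b = b ∧ ∀ x, a ≤ φ x ∧ φ x ≤ b := by
  obtain ⟨a, ha, -, hax⟩ := hφ.exists_bot
  obtain ⟨b, hb, -, hbx⟩ := hφ.exists_top
  refine ⟨a, b, ha, hb, ?_, ?_, fun x => ⟨hax x, hbx x⟩⟩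
  · refine tendsto_nhds_unique ((N.cont.tendsto a).comp (K.tendsto_bot hφ ha ℓ)) ?_
    exact ha.congr he
  · refine tendsto_nhds_unique ((N.cont.tendsto b).comp (K.tendsto_top hφ hb ℓ)) ?_
    exact hb.congr he

theorem abstract_wave (K : Ker q R C) (N : Non p θ) :
    ∃ ℓ φ, Adm φ ∧ (∀ x, φ x = T q p ℓ φ x) ∧ Tendsto φ atBot (𝓝 0) ∧ Tendsto φ atTop (𝓝 1) := by
  have t0 := N.th0
  have t1 := N.th1
  have hdpos : ∀ k : ℕ, 0 < 1 / ((k : ℝ) + 1) := fun k => by positivity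
  have hdle : ∀ k : ℕ, 1 / ((k : ℝ) + 1) ≤ 1 := fun k => by
    rw [div_le_one (by positivity)]; linarith [Nat.cast_nonneg (α := ℝ) k]
  have hd : Tendsto (fun k : ℕ => 1 / ((k : ℝ) + 1)) atTop (𝓝 0) :=
    tendsto_one_div_add_atTop_nhds_zero_nat
  have H : ∀ k : ℕ, ∃ l l' φ, l ≤ l' ∧ l' ≤ l + 1 / ((k : ℝ) + 1) ∧ |l| ≤ R + 1 ∧ Adm φ ∧
      Tendsto φ atBot (𝓝 0) ∧ Tendsto φ atTop (𝓝 1) ∧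
      (∀ x, T q (Gs p θ (1 / ((k : ℝ) + 1))) l φ x ≤ φ x) ∧
      ∀ x, φ x ≤ T q (Gs p θ (1 / ((k : ℝ) + 1))) l' φ x := by
    intro k
    have NG := Gs_non N (hdpos k).le
    obtain ⟨ε, hε, hf1, hf0⟩ := Gs_flat N (hdpos k)
    obtain ⟨l, l', h1, h2, h3, h4, h5⟩ := speeds K NG hε hf1 hf0 (hdpos k)
    obtain ⟨φ, g1, g2, g3, g4, g5⟩ := sandwich K NG h1 h4 h5
    exact ⟨l, l', φ, h1, h2, h3.trans (by linarith [hdle k]), g1, g2, g3, g4, g5⟩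
  choose l l' φ hll hll' hlb hφ hφ0 hφ1 hφs hφs' using H
  obtain ⟨ℓ, -, s, hs, hℓ⟩ := (isCompact_Icc (a := -(R + 1)) (b := R + 1)).tendsto_subseq
    (x := l) (fun k => abs_le.mp (hlb k))
  have hst := hs.tendsto_atTop
  have hds := hd.comp hst
  have hℓ' : Tendsto (fun k => l' (s k)) atTop (𝓝 ℓ) := by
    refine tendsto_of_tendsto_of_tendsto_of_le_of_le hℓ (h := fun k => l (s k) + 1 / ((s k : ℝ) + 1))
      ?_ (fun k => hll _) (fun k => hll' _)
    simpa using hℓ.add hds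
  have W : ∀ c, 0 < c → c < 1 → ∃ φ, Adm φ ∧ (∀ x, φ x = T q p ℓ φ x) ∧ conv q φ 0 = c := by
    intro c hc0 hc1
    choose χ k1 k2 k3 k4 using fun k =>
      normalized K (hφ (s k)) (hφ0 (s k)) (hφ1 (s k)) (hφs (s k)) (hφs' (s k)) hc0 hc1
    exact limit_wave K N hds (fun k x => Gs_close N (hdpos (s k)).le x) hℓ hℓ' k1 k2 k3 k4
  obtain ⟨φ₁, A1, E1, c1⟩ := W (θ / 2) (by linarith) (by linarith)
  obtain ⟨φ₂, A2, E2, c2⟩ := W ((1 + θ) / 2) (by linarith) (by linarith)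
  obtain ⟨a1, b1, ha1, hb1, fa1, fb1, hx1⟩ := wave_limits K N A1 E1
  obtain ⟨a2, b2, ha2, hb2, fa2, fb2, hx2⟩ := wave_limits K N A2 E2
  have i1 : a1 ≤ θ / 2 := c1 ▸ K.le_conv A1 fun z _ => (hx1 _).1
  have i2 : θ / 2 ≤ b1 := c1 ▸ K.conv_le A1 fun z _ => (hx1 _).2
  have i3 : a2 ≤ (1 + θ) / 2 := c2 ▸ K.le_conv A2 fun z _ => (hx2 _).1
  have i4 : (1 + θ) / 2 ≤ b2 := c2 ▸ K.conv_le A2 fun z _ => (hx2 _).2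
  have ea1 : a1 = 0 := by rcases N.fix fa1 with h | h | h <;> linarith
  have eb2 : b2 = 1 := by rcases N.fix fb2 with h | h | h <;> linarith
  subst ea1 eb2
  rcases N.fix fb1 with h | h | h
  · linarith
  rotate_left
  · subst h; exact ⟨ℓ, φ₁, A1, E1, ha1, hb1⟩
  rcases N.fix fa2 with h' | h' | h'
  · subst h'; exact ⟨ℓ, φ₂, A2, E2, ha2, hb2⟩
  rotate_left
  · linarith
  exfalso
  have m1 : ∫ z, z * q z ≤ ℓ := by
    refine mean_sub K A1 ha1 hb1 (by linarith) fun x => ?_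
    rw [E1 x, T]
    have u1 : conv q φ₁ (x + ℓ) ≤ θ := h ▸ K.conv_le A1 fun z _ => (hx1 _).2
    have u0 := (K.adm A1).nonneg (x + ℓ)
    rcases u0.eq_or_lt with u0 | u0
    · rw [← u0, N.zero]
    rcases u1.eq_or_lt with u1 | u1
    · rw [u1, N.th]
    exact (N.below _ u0 u1).le
  have m2 := mean_super K A2 (ℓ := ℓ) ha2 hb2 (by linarith) fun x => by
    conv_rhs => rw [E2 x, T]
    exact N.ge (h' ▸ K.le_conv A2 fun z _ => (hx2 _).1) ((K.adm A2).le_one _)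
  have hcont : Continuous φ₂ := by
    have : φ₂ = fun x => p (conv q φ₂ (x + ℓ)) := funext E2
    rw [this]
    exact N.cont.comp ((K.conv_continuous A2).comp (continuous_id.add continuous_const))
  have m3 := m2.2 (le_antisymm m2.1 m1) hcont (-ℓ)
  rw [E2 (-ℓ), T, neg_add_cancel, c2] at m3
  rcases N.fix m3.symm with h | h | h <;> linarith

end
theorem conv_eq_convolution (q u : ℝ → ℝ) :
    conv q u = convolution q u (ContinuousLinearMap.mul ℝ ℝ) volume := by
  ext x; simp [conv, convolution_def]

theorem conv_qshift (q u : ℝ → ℝ) (ℓ x : ℝ) : conv (qshift q ℓ) u x = conv q u (x + ℓ) := by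
  simp only [conv, qshift]
  rw [← integral_add_right_eq_self (fun y => q y * u (x + ℓ - y)) ℓ]
  congr 1; ext y; congr 2; ring

theorem conv_contDiff (S : BistableSetting) {u : ℝ → ℝ} (hu : Adm u) : ContDiff ℝ 1 (conv S.q u) := by
  rw [conv_eq_convolution]
  exact S.hq_supp.contDiff_convolution_left (n := 1) _ S.hq_diff hu.mono.locallyIntegrable

theorem ker_of (S : BistableSetting) : ∃ R C, Ker S.q R C := by
  obtain ⟨R, hR⟩ := S.hq_supp.isCompact.isBounded.subset_closedBall 0
  have hdint : Integrable (deriv S.q) :=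
    (S.hq_diff.continuous_deriv le_rfl).integrable_of_hasCompactSupport S.hq_supp.deriv
  refine ⟨max R 0, ∫ y, |deriv S.q y|, S.hq_diff.continuous, S.hq_nonneg, S.hq_int,
    le_max_right _ _, integral_nonneg fun y => abs_nonneg _, fun z hz => ?_, fun u hu x y => ?_⟩
  · by_contra hne
    have h1 := hR (subset_tsupport _ hne)
    rw [mem_closedBall_zero_iff, Real.norm_eq_abs] at h1
    exact absurd (h1.trans (le_max_left _ _)) (not_le.mpr hz)
  · have hd : ∀ x, HasDerivAt (conv S.q u) (conv (deriv S.q) u x) x := fun x => by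
      rw [conv_eq_convolution, conv_eq_convolution]
      exact S.hq_supp.hasDerivAt_convolution_left _ S.hq_diff hu.mono.locallyIntegrable x
    have hb : ∀ x, ‖conv (deriv S.q) u x‖ ≤ ∫ y, |deriv S.q y| := fun x => by
      refine norm_integral_le_of_norm_le hdint.abs (Eventually.of_forall fun y => ?_)
      rw [norm_mul, Real.norm_eq_abs, Real.norm_eq_abs, abs_of_nonneg (hu.nonneg _)]
      exact mul_le_of_le_one_right (abs_nonneg _) (hu.le_one _)
    have := convex_univ.norm_image_sub_le_of_norm_hasDerivWithin_le (f := conv S.q u)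
      (fun x _ => (hd x).hasDerivWithinAt) (fun x _ => hb x) (Set.mem_univ y) (Set.mem_univ x)
    simpa using this

/-- The polynomial composed with the projection on `[0,1]`. -/
noncomputable def pc (S : BistableSetting) (x : ℝ) : ℝ := S.P.eval (max 0 (min 1 x))

theorem pc_eq (S : BistableSetting) {x : ℝ} (h0 : 0 ≤ x) (h1 : x ≤ 1) : pc S x = S.P.eval x := by
  rw [pc, min_eq_right h1, max_eq_right h0]

theorem P_monoOn (S : BistableSetting) : MonotoneOn (fun x => S.P.eval x) (Set.Icc 0 1) := by
  refine monotoneOn_of_deriv_nonneg (convex_Icc 0 1) S.P.continuous.continuousOn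
    S.P.differentiable.differentiableOn fun x hx => ?_
  rw [interior_Icc] at hx
  rw [Polynomial.deriv]
  exact (S.hP_mono x hx).le

theorem clamp_mem (x : ℝ) : max 0 (min 1 x) ∈ Set.Icc (0 : ℝ) 1 :=
  ⟨le_max_left _ _, max_le zero_le_one (min_le_left _ _)⟩

theorem P_below (S : BistableSetting) (x : ℝ) (h0 : 0 < x) (h1 : x < S.θ) : S.P.eval x < x := by
  by_contra hcon
  push Not at hcon
  have hd : HasDerivAt (fun x => S.P.eval x - x) ((Polynomial.derivative S.P).eval 0 - 1) 0 :=
    (S.P.hasDerivAt 0).sub (hasDerivAt_id 0)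
  have hneg : (Polynomial.derivative S.P).eval 0 - 1 < 0 := by linarith [S.hf'0]
  have hev : ∀ᶠ y in 𝓝[>] (0 : ℝ), S.P.eval y - y < 0 := by
    have h2 := (hasDerivWithinAt_iff_tendsto_slope' (s := Set.Ioi (0 : ℝ)) (by simp)).mp
      hd.hasDerivWithinAt
    filter_upwards [h2.eventually (gt_mem_nhds hneg), self_mem_nhdsWithin] with y hy hy0
    rw [slope_def_field, S.hP0] at hy
    have hy0' : 0 < y := hy0
    rw [div_lt_iff₀ (by linarith)] at hy
    linarith
  obtain ⟨y, hy, hy0, hyx⟩ := (hev.and (Ioo_mem_nhdsGT h0)).exists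
  have hc : ContinuousOn (fun x => S.P.eval x - x) (Set.Icc y x) :=
    (S.P.continuous.sub continuous_id).continuousOn
  obtain ⟨z, hz, hz0⟩ := intermediate_value_Icc hyx.le hc ⟨hy.le, sub_nonneg.mpr hcon⟩
  have := S.hθ_unique z ⟨by linarith [hz.1], by linarith [hz.2, S.hθ_mem.2]⟩ (sub_eq_zero.mp hz0)
  linarith [hz.2]

theorem P_above (S : BistableSetting) (x : ℝ) (h0 : S.θ < x) (h1 : x < 1) : x < S.P.eval x := by
  by_contra hcon
  push Not at hcon
  have hd : HasDerivAt (fun x => S.P.eval x - x) ((Polynomial.derivative S.P).eval 1 - 1) 1 :=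
    (S.P.hasDerivAt 1).sub (hasDerivAt_id 1)
  have hneg : (Polynomial.derivative S.P).eval 1 - 1 < 0 := by linarith [S.hf'1]
  have hev : ∀ᶠ y in 𝓝[<] (1 : ℝ), 0 < S.P.eval y - y := by
    have h2 := (hasDerivWithinAt_iff_tendsto_slope' (s := Set.Iio (1 : ℝ)) (by simp)).mp
      hd.hasDerivWithinAt
    filter_upwards [h2.eventually (gt_mem_nhds hneg), self_mem_nhdsWithin] with y hy hy0
    rw [slope_def_field, S.hP1] at hy
    have hy0' : y < 1 := hy0
    rw [div_lt_iff_of_neg (by linarith)] at hy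
    linarith
  obtain ⟨y, hy, hyx, hy1⟩ := (hev.and (Ioo_mem_nhdsLT h1)).exists
  have hc : ContinuousOn (fun x => S.P.eval x - x) (Set.Icc x y) :=
    (S.P.continuous.sub continuous_id).continuousOn
  obtain ⟨z, hz, hz0⟩ := intermediate_value_Icc hyx.le hc ⟨sub_nonpos.mpr hcon, hy.le⟩
  have := S.hθ_unique z ⟨by linarith [hz.1, S.hθ_mem.1], by linarith [hz.2]⟩ (sub_eq_zero.mp hz0)
  linarith [hz.1]

theorem pc_non (S : BistableSetting) : Non (pc S) S.θ where
  cont := S.P.continuous.comp (by fun_prop)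
  mono := fun x y h => P_monoOn S (clamp_mem x) (clamp_mem y) (by gcongr)
  nonneg := fun x => by
    have := P_monoOn S (⟨le_rfl, zero_le_one⟩) (clamp_mem x) (clamp_mem x).1
    simp only [S.hP0] at this; exact this
  le_one := fun x => by
    have := P_monoOn S (clamp_mem x) (⟨zero_le_one, le_rfl⟩) (clamp_mem x).2
    simp only [S.hP1] at this; exact this
  zero := by rw [pc_eq S le_rfl zero_le_one, S.hP0]
  one := by rw [pc_eq S zero_le_one le_rfl, S.hP1]
  th := by rw [pc_eq S S.hθ_mem.1.le S.hθ_mem.2.le, S.hθ_zero]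
  th0 := S.hθ_mem.1
  th1 := S.hθ_mem.2
  below := fun x h0 h1 => by
    rw [pc_eq S h0.le (h1.le.trans S.hθ_mem.2.le)]; exact P_below S x h0 h1
  above := fun x h0 h1 => by
    rw [pc_eq S (S.hθ_mem.1.le.trans h0.le) h1.le]; exact P_above S x h0 h1

/-- Existence of a traveling wave in the bistable case. -/
theorem traveling_wave_exists (S : BistableSetting) :
    ∃ (ℓ : ℝ) (φ : ℝ → ℝ), IsTravelingWave S ℓ φ := by
  obtain ⟨R, C, K⟩ := ker_of S
  obtain ⟨ℓ, φ, hφ, he, h0, h1⟩ := abstract_wave K (pc_non S)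
  have hP : ∀ x, φ x = S.P.eval (conv S.q φ (x + ℓ)) := fun x => by
    rw [he x, T, pc_eq S ((K.adm hφ).nonneg _) ((K.adm hφ).le_one _)]
  refine ⟨ℓ, φ, hφ.mono, ?_, fun x => ?_, h0, h1⟩
  · have e : φ = fun x => S.P.eval (conv S.q φ (x + ℓ)) := funext hP
    rw [e]
    have hPc : ContDiff ℝ 1 (fun x => S.P.eval x) := by
      simpa using S.P.contDiff_aeval (𝕜 := ℝ) 1
    exact hPc.comp ((conv_contDiff S hφ).comp (contDiff_id.add contDiff_const))
  · rw [conv_qshift, BistableSetting.g, if_neg (not_lt.mpr ((K.adm hφ).nonneg _)),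
      if_pos ((K.adm hφ).le_one _)]
    exact hP x
end

section
/- Let φ be a traveling wave with speed ℓ. Then there exist K > 0, δ_0 > 0 and r_0 > 0 with the following property: if ξ_0^−, ξ_0^+ ∈ ℝ, 0 ≤ β_0 ≤ δ_0, and (w_n)_{n≥0} is a sequence of bounded measurable functions satisfying w_{n+1}(x) = g((q * w_n)(x)) for all n and x, with φ(x + ξ_0^−) − β_0 ≤ w_0(x) ≤ φ(x + ξ_0^+) + β_0 for all x ∈ ℝ, then for all n ≥ 1 and all x ∈ ℝ: φ(x − nℓ + ξ_n^−) − β_n ≤ w_n(x) ≤ φ(x − nℓ + ξ_n^+) + β_n, where β_n = β_0 e^{−r_0 n}, ξ_n^− = ξ_0^− − K β_0 (1 − e^{−r_0 n}), and ξ_n^+ = ξ_0^+ + K β_0 (1 − e^{−r_0 n}). -/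
open MeasureTheory Filter Topology

namespace TW

section kernel
variable {k : ℝ → ℝ} (hk : Continuous k) (hs : HasCompactSupport k) (h0 : ∀ x, 0 ≤ k x)
  (h1 : ∫ x : ℝ, k x = 1)

theorem integrable_conv (hk : Continuous k) (hs : HasCompactSupport k) {u : ℝ → ℝ}
    (hu : Measurable u) {C : ℝ} (hC : ∀ x, |u x| ≤ C) (x : ℝ) :
    Integrable (fun y => k y * u (x - y)) := by
  have hi : Integrable k := hk.integrable_of_hasCompactSupport hs
  refine hi.mul_bdd (c := C) ?_ ?_
  · exact (hu.comp (measurable_const.sub measurable_id)).aestronglyMeasurable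
  · exact Eventually.of_forall fun y => by simpa using hC (x - y)

theorem conv_mono (hk : Continuous k) (hs : HasCompactSupport k) (h0 : ∀ x, 0 ≤ k x)
    {u v : ℝ → ℝ} (hu : Measurable u) (hv : Measurable v)
    {C D : ℝ} (hC : ∀ x, |u x| ≤ C) (hD : ∀ x, |v x| ≤ D) (x : ℝ)
    (huv : ∀ y, k y ≠ 0 → u (x - y) ≤ v (x - y)) : conv k u x ≤ conv k v x := by
  unfold conv
  refine integral_mono (integrable_conv hk hs hu hC x) (integrable_conv hk hs hv hD x) ?_
  intro y
  by_cases hy : k y = 0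
  · simp [hy]
  · exact mul_le_mul_of_nonneg_left (huv y hy) (h0 y)

theorem conv_const (h1 : ∫ x : ℝ, k x = 1) (c x : ℝ) : conv k (fun _ => c) x = c := by
  unfold conv
  rw [integral_mul_const, h1, one_mul]

theorem conv_add_const (hk : Continuous k) (hs : HasCompactSupport k) (h1 : ∫ x : ℝ, k x = 1)
    {u : ℝ → ℝ} (hu : Measurable u) {C : ℝ} (hC : ∀ x, |u x| ≤ C) (a b x : ℝ) :
    conv k (fun y => u (y + a) + b) x = conv k u (x + a) + b := by
  unfold conv
  have hi : Integrable k := hk.integrable_of_hasCompactSupport hs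
  have : ∀ y, k y * (u (x - y + a) + b) = k y * u (x + a - y) + k y * b := by
    intro y
    rw [show x - y + a = x + a - y by ring]; ring
  simp_rw [this]
  rw [integral_add (integrable_conv hk hs hu hC _) (hi.mul_const b), integral_mul_const, h1, one_mul]

theorem conv_qshift (q u : ℝ → ℝ) (ℓ x : ℝ) : conv (qshift q ℓ) u x = conv q u (x + ℓ) := by
  unfold conv qshift
  rw [← integral_add_right_eq_self (fun z => q z * u (x + ℓ - z)) ℓ]
  congr 1; ext y; congr 2; ring

theorem conv_zero (hk : Continuous k) (hs : HasCompactSupport k) (h0 : ∀ x, 0 ≤ k x)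
    {u : ℝ → ℝ} (hu : Continuous u) (hu0 : ∀ x, 0 ≤ u x) {x : ℝ} (hx : conv k u x = 0)
    {z : ℝ} (hz : 0 < k z) : u (x - z) = 0 := by
  by_contra hne
  have := Continuous.integral_pos_of_hasCompactSupport_nonneg_nonzero (μ := volume)
    (f := fun y => k y * u (x - y)) (by fun_prop) hs.mul_right
    (fun y => mul_nonneg (h0 y) (hu0 _)) (x := z) (mul_ne_zero hz.ne' hne)
  unfold conv at hx
  linarith

theorem exists_supp (hs : HasCompactSupport k) : ∃ R : ℝ, 0 < R ∧ ∀ y, k y ≠ 0 → |y| ≤ R := by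
  obtain ⟨R, hR⟩ := hs.isCompact.isBounded.exists_norm_le
  refine ⟨max R 1, by positivity, fun y hy => ?_⟩
  exact (hR y (subset_tsupport _ hy)).trans (le_max_left _ _)

theorem conv_deriv (hk : Continuous k) (hs : HasCompactSupport k) 
    {u : ℝ → ℝ} (hu : ContDiff ℝ 1 u) (x : ℝ) :
    HasDerivAt (conv k u) (conv k (deriv u) x) x := by
  obtain ⟨R, hR0, hR⟩ := exists_supp hs
  have hd : Continuous (deriv u) := hu.continuous_deriv le_rfl
  have hc : Continuous u := hu.continuous
  obtain ⟨C, hC⟩ := (isCompact_Icc (a := x - 1 - R) (b := x + 1 + R)).exists_bound_of_continuousOn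
    hd.continuousOn
  have := hasDerivAt_integral_of_dominated_loc_of_deriv_le (μ := (volume : Measure ℝ))
    (F := fun x y => k y * u (x - y)) (F' := fun x y => k y * deriv u (x - y)) (x₀ := x)
    (s := Metric.ball x 1) (bound := fun y => |k y| * C) (Metric.ball_mem_nhds x one_pos)
    (Eventually.of_forall fun x => (by fun_prop : Continuous _).aestronglyMeasurable)
    ((by fun_prop : Continuous fun y => k y * u (x - y)).integrable_of_hasCompactSupport hs.mul_right)
    (by fun_prop : Continuous fun y => k y * deriv u (x - y)).aestronglyMeasurable
    (Eventually.of_forall fun y z hz => by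
      by_cases hy : k y = 0
      · simp [hy]
      · rw [norm_mul, Real.norm_eq_abs (k y)]
        refine mul_le_mul_of_nonneg_left (hC _ ?_) (abs_nonneg _)
        have := abs_le.1 (hR y hy)
        rw [Metric.mem_ball, Real.dist_eq, abs_lt] at hz
        constructor <;> linarith)
    ((hk.integrable_of_hasCompactSupport hs).abs.mul_const C)
    (Eventually.of_forall fun y z hz => by
      have h2 : HasDerivAt u (deriv u (z - y)) (z - y) :=
        (hu.differentiable (by norm_num) _).hasDerivAt
      simpa using (h2.comp_sub_const z y).const_mul (k y))
  exact this.2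

end kernel

/-- clamp to the unit interval -/
noncomputable def cl (x : ℝ) : ℝ := max 0 (min x 1)

theorem cl_mem (x : ℝ) : cl x ∈ Set.Icc (0:ℝ) 1 :=
  ⟨le_max_left _ _, max_le zero_le_one (min_le_right _ _)⟩

theorem dP_nonneg (S : BistableSetting) {x : ℝ} (hx : x ∈ Set.Icc (0:ℝ) 1) :
    0 ≤ (Polynomial.derivative S.P).eval x := by
  have hcl : IsClosed {x : ℝ | 0 ≤ (Polynomial.derivative S.P).eval x} :=
    isClosed_le continuous_const (Polynomial.continuous _)
  have : Set.Icc (0:ℝ) 1 ⊆ {x : ℝ | 0 ≤ (Polynomial.derivative S.P).eval x} := by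
    rw [← closure_Ioo (zero_ne_one)]
    exact hcl.closure_subset_iff.2 fun y hy => (S.hP_mono y hy).le
  exact this hx

theorem g_neg (S : BistableSetting) {x : ℝ} (hx : x ≤ 0) :
    S.g x = (Polynomial.derivative S.P).eval 0 * x := by
  unfold BistableSetting.g
  rcases hx.lt_or_eq with h | h
  · simp [h]
  · subst h; simp [S.hP0]

theorem g_mid (S : BistableSetting) {x : ℝ} (hx : x ∈ Set.Icc (0:ℝ) 1) :
    S.g x = S.P.eval x := by
  unfold BistableSetting.g
  rw [if_neg (not_lt.2 hx.1), if_pos hx.2]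

theorem g_big (S : BistableSetting) {x : ℝ} (hx : 1 ≤ x) :
    S.g x = 1 + (Polynomial.derivative S.P).eval 1 * (x - 1) := by
  unfold BistableSetting.g
  rw [if_neg (by linarith)]
  rcases hx.lt_or_eq with h | h
  · rw [if_neg (by linarith)]
  · subst h; simp [S.hP1]

theorem g_deriv (S : BistableSetting) (x : ℝ) :
    HasDerivAt S.g ((Polynomial.derivative S.P).eval (cl x)) x := by
  have A : ∀ x ≤ 0, HasDerivWithinAt S.g ((Polynomial.derivative S.P).eval 0) (Set.Iic 0) x := by
    intro x hx
    have : HasDerivAt (fun y => (Polynomial.derivative S.P).eval 0 * y)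
      ((Polynomial.derivative S.P).eval 0) x := by
      simpa using (hasDerivAt_id x).const_mul ((Polynomial.derivative S.P).eval 0)
    exact this.hasDerivWithinAt.congr (fun y hy => g_neg S hy) (g_neg S hx)
  have B : ∀ x ∈ Set.Icc (0:ℝ) 1,
      HasDerivWithinAt S.g ((Polynomial.derivative S.P).eval x) (Set.Icc 0 1) x := by
    intro x hx
    exact (S.P.hasDerivAt x).hasDerivWithinAt.congr (fun y hy => g_mid S hy) (g_mid S hx)
  have C : ∀ x, 1 ≤ x →
      HasDerivWithinAt S.g ((Polynomial.derivative S.P).eval 1) (Set.Ici 1) x := by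
    intro x hx
    have : HasDerivAt (fun y => 1 + (Polynomial.derivative S.P).eval 1 * (y - 1))
      ((Polynomial.derivative S.P).eval 1) x := by
      simpa using (((hasDerivAt_id x).sub_const 1).const_mul
        ((Polynomial.derivative S.P).eval 1)).const_add 1
    exact this.hasDerivWithinAt.congr (fun y hy => g_big S hy) (g_big S hx)
  rcases lt_trichotomy x 0 with h | h | h
  · have e : cl x = 0 := by unfold cl; rw [max_eq_left]; exact (min_le_left _ _).trans h.le
    rw [e]; exact (A x h.le).hasDerivAt (Iic_mem_nhds h)
  · subst h
    have e : cl 0 = 0 := by simp [cl]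
    rw [e]
    refine ((A 0 le_rfl).union (B 0 (by simp))).hasDerivAt ?_
    filter_upwards [Iio_mem_nhds (zero_lt_one' ℝ)] with y hy
    rcases le_total y 0 with h | h
    · exact Or.inl h
    · exact Or.inr ⟨h, le_of_lt hy⟩
  · rcases lt_trichotomy x 1 with hb | hb | hb
    · have e : cl x = x := by unfold cl; rw [min_eq_left hb.le, max_eq_right h.le]
      rw [e]; exact (B x ⟨h.le, hb.le⟩).hasDerivAt (Icc_mem_nhds h hb)
    · subst hb
      have e : cl 1 = 1 := by simp [cl]
      rw [e]
      refine ((B 1 (by simp)).union (C 1 le_rfl)).hasDerivAt ?_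
      filter_upwards [Ioi_mem_nhds (zero_lt_one' ℝ)] with y hy
      rcases le_total y 1 with h | h
      · exact Or.inl ⟨le_of_lt hy, h⟩
      · exact Or.inr h
    · have e : cl x = 1 := by unfold cl; rw [min_eq_right hb.le, max_eq_right zero_le_one]
      rw [e]; exact (C x hb.le).hasDerivAt (Ici_mem_nhds hb)

theorem g_mvt (S : BistableSetting) {s t : ℝ} (hst : s ≤ t) :
    ∃ c ∈ Set.Icc s t, S.g t - S.g s = (Polynomial.derivative S.P).eval (cl c) * (t - s) := by
  rcases hst.eq_or_lt with h | h
  · subst h; exact ⟨s, by simp, by simp⟩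
  · obtain ⟨c, hc, e⟩ := exists_hasDerivAt_eq_slope S.g _ h
      (fun x _ => (g_deriv S x).continuousAt.continuousWithinAt) (fun x _ => g_deriv S x)
    refine ⟨c, Set.Ioo_subset_Icc_self hc, ?_⟩
    rw [e, div_mul_cancel₀]; linarith

theorem g_monotone (S : BistableSetting) : Monotone S.g := by
  intro s t hst
  obtain ⟨c, _, e⟩ := g_mvt S hst
  have := mul_nonneg (dP_nonneg S (cl_mem c)) (sub_nonneg.2 hst)
  linarith

theorem g_lip (S : BistableSetting) : ∃ L : ℝ, 0 ≤ L ∧ ∀ s t, s ≤ t →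
    S.g t - S.g s ≤ L * (t - s) := by
  obtain ⟨L, hL⟩ := (isCompact_Icc (a := (0:ℝ)) (b := 1)).exists_bound_of_continuousOn
    (Polynomial.continuous (Polynomial.derivative S.P)).continuousOn
  refine ⟨L, (norm_nonneg _).trans (hL 0 (by simp)), fun s t hst => ?_⟩
  obtain ⟨c, _, e⟩ := g_mvt S hst
  rw [e]
  exact mul_le_mul_of_nonneg_right ((le_abs_self _).trans (hL _ (cl_mem c))) (by linarith)

theorem g_contr (S : BistableSetting) : ∃ ρ η : ℝ, 0 < ρ ∧ ρ < 1 ∧ 0 < η ∧ ∀ s t, s ≤ t →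
    (t ≤ η ∨ 1 - η ≤ s) → S.g t - S.g s ≤ ρ * (t - s) := by
  set D : ℝ → ℝ := fun x => (Polynomial.derivative S.P).eval x with hD
  have hDc : Continuous D := Polynomial.continuous _
  have a0 : 0 ≤ D 0 := dP_nonneg S (by simp)
  have a1 : 0 ≤ D 1 := dP_nonneg S (by simp)
  have b0 : D 0 < 1 := S.hf'0
  have b1 : D 1 < 1 := S.hf'1
  obtain ⟨ρ, hρ, hρ1⟩ := exists_between (max_lt b0 b1)
  have c0 : D 0 < ρ := (le_max_left _ _).trans_lt hρ
  have c1 : D 1 < ρ := (le_max_right _ _).trans_lt hρ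
  obtain ⟨η0, hη0, H0⟩ := Metric.eventually_nhds_iff.1 (hDc.continuousAt.eventually_lt_const c0)
  obtain ⟨η1, hη1, H1⟩ := Metric.eventually_nhds_iff.1 (hDc.continuousAt.eventually_lt_const c1)
  refine ⟨ρ, min η0 η1 / 2, by linarith, hρ1, by positivity, fun s t hst hh => ?_⟩
  obtain ⟨c, hc, e⟩ := g_mvt S hst
  rw [e]
  refine mul_le_mul_of_nonneg_right (le_of_lt ?_) (by linarith)
  have m0 := min_le_left η0 η1
  have m1 := min_le_right η0 η1
  have mp : 0 < min η0 η1 := lt_min hη0 hη1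
  have hcl := cl_mem c
  rcases hh with hh | hh
  · apply H0
    have : cl c ≤ min η0 η1 / 2 := max_le (by linarith) ((min_le_left _ _).trans (hc.2.trans hh))
    rw [Real.dist_eq, abs_lt]
    constructor <;> linarith [hcl.1]
  · apply H1
    have : 1 - min η0 η1 / 2 ≤ cl c := le_max_of_le_right (le_min (hh.trans hc.1) (by linarith))
    rw [Real.dist_eq, abs_lt]
    constructor <;> linarith [hcl.2]

/-- sign of `f` below `θ`. -/
theorem g_lt (S : BistableSetting) : ∃ s0 ∈ Set.Ioo (0:ℝ) 1, ∀ s ∈ Set.Ioo 0 s0, S.g s < s := by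
  obtain ⟨ρ, η, h0, h1, hη, H⟩ := g_contr S
  refine ⟨min η (1/2), ⟨by positivity, (min_le_right _ _).trans_lt (by norm_num)⟩, fun s hs => ?_⟩
  have := H 0 s hs.1.le (Or.inl (hs.2.le.trans (min_le_left _ _)))
  have e : S.g 0 = 0 := by rw [g_neg S le_rfl, mul_zero]
  nlinarith [hs.1]

theorem g_gt (S : BistableSetting) : ∃ s0 ∈ Set.Ioo (0:ℝ) 1, ∀ s ∈ Set.Ioo s0 1, s < S.g s := by
  obtain ⟨ρ, η, h0, h1, hη, H⟩ := g_contr S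
  refine ⟨max (1 - η) (1/2), ⟨lt_max_of_lt_right (by norm_num), max_lt (by linarith) (by norm_num)⟩,
    fun s hs => ?_⟩
  have := H s 1 hs.2.le (Or.inr ((le_max_left _ _).trans hs.1.le))
  have e : S.g 1 = 1 := by rw [g_big S le_rfl]; ring
  nlinarith [hs.2]

section wave
variable {S : BistableSetting} {ℓ : ℝ} {φ : ℝ → ℝ}

theorem phi_nonneg (h : IsTravelingWave S ℓ φ) (x : ℝ) : 0 ≤ φ x := h.mono.le_of_tendsto h.limit_bot x
theorem phi_le_one (h : IsTravelingWave S ℓ φ) (x : ℝ) : φ x ≤ 1 := h.mono.ge_of_tendsto h.limit_top x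
theorem phi_bdd (h : IsTravelingWave S ℓ φ) (x : ℝ) : |φ x| ≤ 1 :=
  abs_le.2 ⟨by linarith [phi_nonneg h x], phi_le_one h x⟩

theorem phi_val (h : IsTravelingWave S ℓ φ) {a b : ℝ} (ha : 0 ≤ a) (hab : a < b) (hb : b ≤ 1) :
    ∃ x, φ x ∈ Set.Ioo a b := by
  obtain ⟨m, hm1, hm2⟩ := exists_between hab
  have e1 : ∃ x, φ x ≤ m :=
    ((h.limit_bot.eventually_lt_const (ha.trans_lt hm1)).exists).imp fun _ => le_of_lt
  have e2 : ∃ x, m ≤ φ x :=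
    ((h.limit_top.eventually_const_lt (hm2.trans_le hb)).exists).imp fun _ => le_of_lt
  obtain ⟨x1, h1⟩ := e1
  obtain ⟨x2, h2⟩ := e2
  obtain ⟨x, hx⟩ := mem_range_of_exists_le_of_exists_ge h.smooth.continuous ⟨x1, h1⟩ ⟨x2, h2⟩
  exact ⟨x, by rw [hx]; exact ⟨hm1, hm2⟩⟩


/-- kernel facts for the shifted kernel -/
theorem kfacts (S : BistableSetting) (ℓ : ℝ) : Continuous (qshift S.q ℓ) ∧ HasCompactSupport (qshift S.q ℓ) ∧
    (∀ x, 0 ≤ qshift S.q ℓ x) ∧ ∫ x, qshift S.q ℓ x = 1 := by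
  refine ⟨?_, ?_, fun x => S.hq_nonneg _, ?_⟩
  · exact S.hq_diff.continuous.comp (by fun_prop)
  · exact S.hq_supp.comp_homeomorph (Homeomorph.addRight ℓ)
  · unfold qshift
    rw [integral_add_right_eq_self S.q ℓ, S.hq_int]

theorem exists_neg (h : IsTravelingWave S ℓ φ) : ∃ p > 0, 0 < qshift S.q ℓ (-p) := by
  obtain ⟨k1, k2, k3, k4⟩ := kfacts S ℓ
  by_contra! hcon
  obtain ⟨s0, hs0, H⟩ := g_lt S
  obtain ⟨x, hx⟩ := phi_val h le_rfl hs0.1 hs0.2.le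
  have : conv (qshift S.q ℓ) φ x ≤ conv (qshift S.q ℓ) (fun _ => φ x) x := by
    refine conv_mono k1 k2 k3 h.smooth.continuous.measurable measurable_const (phi_bdd h)
      (fun _ => phi_bdd h x) x ?_
    intro y hy
    apply h.mono
    by_contra hyb
    have := hcon (-y) (by linarith)
    rw [neg_neg] at this
    exact hy (le_antisymm this (k3 y))
  rw [conv_const k4] at this
  have h2 := g_monotone S this
  rw [← h.wave_eq] at h2
  linarith [H _ hx]

theorem exists_pos (h : IsTravelingWave S ℓ φ) : ∃ p > 0, 0 < qshift S.q ℓ p := by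
  obtain ⟨k1, k2, k3, k4⟩ := kfacts S ℓ
  by_contra! hcon
  obtain ⟨s0, hs0, H⟩ := g_gt S
  obtain ⟨x, hx⟩ := phi_val h hs0.1.le hs0.2 le_rfl
  have : conv (qshift S.q ℓ) (fun _ => φ x) x ≤ conv (qshift S.q ℓ) φ x := by
    refine conv_mono k1 k2 k3 measurable_const h.smooth.continuous.measurable 
      (fun _ => phi_bdd h x) (phi_bdd h) x ?_
    intro y hy
    apply h.mono
    by_contra hyb
    have := hcon y (by linarith)
    exact hy (le_antisymm this (k3 y))
  rw [conv_const k4] at this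
  have h2 := g_monotone S this
  rw [← h.wave_eq] at h2
  linarith [H _ hx]

theorem Phi_mem (h : IsTravelingWave S ℓ φ) (x : ℝ) :
    conv (qshift S.q ℓ) φ x ∈ Set.Icc (0:ℝ) 1 := by
  obtain ⟨k1, k2, k3, k4⟩ := kfacts S ℓ
  constructor
  · have := conv_mono k1 k2 k3 measurable_const h.smooth.continuous.measurable 
      (fun _ => (abs_zero (α := ℝ)).le) (phi_bdd h) x (fun y _ => phi_nonneg h _)
    rwa [conv_const k4] at this
  · have := conv_mono k1 k2 k3 h.smooth.continuous.measurable measurable_const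
      (phi_bdd h) (fun _ => (abs_one (α := ℝ)).le) x (fun y _ => phi_le_one h _)
    rwa [conv_const k4] at this

theorem Phi_pos (h : IsTravelingWave S ℓ φ) (x : ℝ) : 0 < conv (qshift S.q ℓ) φ x := by
  obtain ⟨k1, k2, k3, k4⟩ := kfacts S ℓ
  obtain ⟨p, hp, hkp⟩ := exists_neg h
  refine lt_of_le_of_ne (Phi_mem h x).1 fun hx => ?_
  have step : ∀ y, φ y = 0 → φ (y + p) = 0 := by
    intro y hy
    have hP : conv (qshift S.q ℓ) φ y = 0 := by
      by_contra hne
      have hm := Phi_mem h y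
      have hpos : 0 < conv (qshift S.q ℓ) φ y := lt_of_le_of_ne hm.1 (Ne.symm hne)
      have e := h.wave_eq y
      rw [hy, g_mid S hm] at e
      rcases hm.2.lt_or_eq with h1 | h1
      · linarith [(S.hP_range _ ⟨hpos, h1⟩).1]
      · rw [h1, S.hP1] at e; linarith
    have := conv_zero k1 k2 k3 h.smooth.continuous (phi_nonneg h) hP hkp
    simpa using this
  have hx0 : φ x = 0 := by rw [h.wave_eq, ← hx, g_neg S le_rfl, mul_zero]
  have hn : ∀ n : ℕ, φ (x + n * p) = 0 := by
    intro n
    induction n with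
    | zero => simpa using hx0
    | succ n ih =>
      have := step _ ih
      rw [← this]; congr 1; push_cast; ring
  obtain ⟨y, hy⟩ := (h.limit_top.eventually_const_lt one_pos).exists
  obtain ⟨n, hnb⟩ := exists_nat_gt ((y - x) / p)
  rw [div_lt_iff₀ hp] at hnb
  have := h.mono (show y ≤ x + n * p by linarith)
  rw [hn] at this
  linarith

theorem Phi_lt_one (h : IsTravelingWave S ℓ φ) (x : ℝ) : conv (qshift S.q ℓ) φ x < 1 := by
  obtain ⟨k1, k2, k3, k4⟩ := kfacts S ℓ
  obtain ⟨p, hp, hkp⟩ := exists_pos h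
  refine lt_of_le_of_ne (Phi_mem h x).2 fun hx => ?_
  have step : ∀ y, φ y = 1 → φ (y - p) = 1 := by
    intro y hy
    have hP : conv (qshift S.q ℓ) φ y = 1 := by
      by_contra hne
      have hm := Phi_mem h y
      have e := h.wave_eq y
      rw [hy, g_mid S hm] at e
      linarith [(S.hP_range _ ⟨Phi_pos h y, lt_of_le_of_ne hm.2 hne⟩).2]
    have h3 : conv (qshift S.q ℓ) (fun z => 1 - φ z) y = 0 := by
      unfold conv at hP ⊢
      simp_rw [mul_sub, mul_one]
      rw [integral_sub (k1.integrable_of_hasCompactSupport k2)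
        (integrable_conv k1 k2 h.smooth.continuous.measurable (phi_bdd h) y), hP, k4, sub_self]
    have := conv_zero k1 k2 k3 (continuous_const.sub h.smooth.continuous)
      (fun z => sub_nonneg.2 (phi_le_one h z)) h3 hkp
    simp only [Pi.sub_apply] at this
    linarith
  have hx0 : φ x = 1 := by rw [h.wave_eq, hx, g_big S le_rfl]; ring
  have hn : ∀ n : ℕ, φ (x - n * p) = 1 := by
    intro n
    induction n with
    | zero => simpa using hx0
    | succ n ih =>
      have := step _ ih
      rw [← this]; congr 1; push_cast; ring
  obtain ⟨y, hy⟩ := (h.limit_bot.eventually_lt_const one_pos).exists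
  obtain ⟨n, hnb⟩ := exists_nat_gt ((x - y) / p)
  rw [div_lt_iff₀ hp] at hnb
  have := h.mono (show x - n * p ≤ y by linarith)
  rw [hn] at this
  linarith

theorem dphi_pos (h : IsTravelingWave S ℓ φ) (x : ℝ) : 0 < deriv φ x := by
  obtain ⟨k1, k2, k3, k4⟩ := kfacts S ℓ
  have hdn : ∀ x, 0 ≤ deriv φ x := fun x => h.mono.deriv_nonneg
  have hdc : Continuous (deriv φ) := h.smooth.continuous_deriv le_rfl
  refine lt_of_le_of_ne (hdn x) fun hx => ?_
  have step : ∀ y z, deriv φ y = 0 → 0 < qshift S.q ℓ z → deriv φ (y - z) = 0 := by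
    intro y z hy hz
    refine conv_zero k1 k2 k3 hdc hdn ?_ hz
    have hd := (g_deriv S (conv (qshift S.q ℓ) φ y)).comp y (conv_deriv k1 k2 h.smooth y)
    have e : S.g ∘ conv (qshift S.q ℓ) φ = φ := by ext z; exact (h.wave_eq z).symm
    rw [e] at hd
    have e2 := hd.deriv
    rw [hy] at e2
    have hcl : cl (conv (qshift S.q ℓ) φ y) = conv (qshift S.q ℓ) φ y := by
      unfold cl; rw [min_eq_left (Phi_mem h y).2, max_eq_right (Phi_mem h y).1]
    have hpos := S.hP_mono _ ⟨Phi_pos h y, Phi_lt_one h y⟩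
    rw [hcl] at e2
    rcases mul_eq_zero.1 e2.symm with h | h
    · exact absurd h hpos.ne'
    · exact h
  obtain ⟨p, hp, hkp⟩ := exists_neg h
  obtain ⟨s, hs, hks⟩ := exists_pos h
  obtain ⟨ε1, hε1, H1⟩ := Metric.eventually_nhds_iff.1 (k1.continuousAt.eventually_const_lt hkp)
  obtain ⟨ε2, hε2, H2⟩ := Metric.eventually_nhds_iff.1 (k1.continuousAt.eventually_const_lt hks)
  set ε := min ε1 ε2 with hε
  have hεp : 0 < ε := lt_min hε1 hε2
  have iter : ∀ (a : ℝ), 0 < qshift S.q ℓ a → ∀ (n : ℕ) y, deriv φ y = 0 →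
      deriv φ (y - n * a) = 0 := by
    intro a ha n y hy
    induction n with
    | zero => simpa using hy
    | succ n ih =>
      have := step _ _ ih ha
      rw [← this]; congr 1; push_cast; ring
  have all : ∀ t, deriv φ t = 0 := by
    intro t
    obtain ⟨n, hn⟩ := exists_nat_gt (max (p / ε) ((x - t) / s))
    have hn1 := (le_max_left _ _).trans_lt hn
    have hn2 := (le_max_right _ _).trans_lt hn
    rw [div_lt_iff₀ hεp] at hn1
    rw [div_lt_iff₀ hs] at hn2
    set m := ⌊(n * s + t - x) / p⌋₊ with hm
    have hq : 0 ≤ (n * s + t - x) / p := div_nonneg (by linarith) hp.le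
    have f1 := Nat.floor_le hq
    have f2 := Nat.lt_floor_add_one ((n * s + t - x) / p)
    rw [← hm] at f1 f2
    rw [le_div_iff₀ hp] at f1
    rw [div_lt_iff₀ hp] at f2
    have hm0 : (0:ℝ) ≤ m := Nat.cast_nonneg m
    have hnpos : (0:ℝ) < n := by
      by_contra hc
      have : (n:ℝ) * ε ≤ 0 := mul_nonpos_of_nonpos_of_nonneg (not_lt.1 hc) hεp.le
      linarith
    have hmn : (0:ℝ) < m + n := by linarith
    set d := (n * s + t - x - m * p) / (m + n) with hd
    have hdd : d * (m + n) = n * s + t - x - m * p := div_mul_cancel₀ _ hmn.ne'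
    have hd0 : 0 ≤ d := div_nonneg (by linarith) hmn.le
    have hd1 : d < ε := by
      rw [hd, div_lt_iff₀ hmn]
      nlinarith
    have g1 : 0 < qshift S.q ℓ (-p - d) := by
      apply H1
      rw [Real.dist_eq, show -p - d - -p = -d by ring, abs_neg, abs_of_nonneg hd0]
      exact hd1.trans_le (min_le_left _ _)
    have g2 : 0 < qshift S.q ℓ (s - d) := by
      apply H2
      rw [Real.dist_eq, show s - d - s = -d by ring, abs_neg, abs_of_nonneg hd0]
      exact hd1.trans_le (min_le_right _ _)
    have := iter _ g2 n _ (iter _ g1 m x hx.symm)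
    rw [← this]; congr 1
    linarith
  have hconst := is_const_of_deriv_eq_zero (h.smooth.differentiable (by norm_num)) all
  obtain ⟨y, hy⟩ := phi_val h (a := 0) (b := 1/2) le_rfl (by norm_num) (by norm_num)
  obtain ⟨z, hz⟩ := phi_val h (a := 1/2) (b := 1) (by norm_num) (by norm_num) le_rfl
  have := hconst y z
  linarith [hy.2, hz.1]

theorem dphi_lower (h : IsTravelingWave S ℓ φ) (M : ℝ) (hM : 0 < M) :
    ∃ c > 0, ∀ a b, -M ≤ a → a ≤ b → b ≤ M → c * (b - a) ≤ φ b - φ a := by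
  have hdc : Continuous (deriv φ) := h.smooth.continuous_deriv le_rfl
  obtain ⟨z, hz, hmin⟩ := (isCompact_Icc (a := -M) (b := M)).exists_isMinOn
    ⟨0, by constructor <;> linarith⟩ hdc.continuousOn
  refine ⟨deriv φ z, dphi_pos h z, fun a b ha hab hb => ?_⟩
  rcases hab.eq_or_lt with e | hab
  · subst e; simp
  · obtain ⟨c, hc, e⟩ := exists_deriv_eq_slope φ hab h.smooth.continuous.continuousOn
      (h.smooth.differentiable (by norm_num)).differentiableOn
    have h1 : deriv φ z ≤ deriv φ c := hmin ⟨by linarith [hc.1], by linarith [hc.2]⟩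
    rw [e, le_div_iff₀ (by linarith)] at h1
    exact h1

theorem Phi_tail (h : IsTravelingWave S ℓ φ) {η : ℝ} (hη : 0 < η) :
    ∃ M > 0, (∀ y ≤ -M, conv (qshift S.q ℓ) φ y ≤ η) ∧
      (∀ y, M ≤ y → 1 - η ≤ conv (qshift S.q ℓ) φ y) := by
  obtain ⟨k1, k2, k3, k4⟩ := kfacts S ℓ
  obtain ⟨R, hR0, hR⟩ := exists_supp k2
  obtain ⟨A, hA⟩ := (h.limit_bot.eventually_lt_const hη).exists
  obtain ⟨B, hB⟩ := (h.limit_top.eventually_const_lt (show 1 - η < 1 by linarith)).exists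
  refine ⟨max 1 (max (R - A) (R + B)), by positivity, fun y hy => ?_, fun y hy => ?_⟩
  · have m1 : R - A ≤ -y := (le_max_left _ _).trans ((le_max_right _ _).trans (by linarith))
    have := conv_mono k1 k2 k3 h.smooth.continuous.measurable measurable_const
      (phi_bdd h) (fun _ => le_refl |η|) y
      (fun z hz => (h.mono (by linarith [(abs_le.1 (hR z hz)).1])).trans hA.le)
    rwa [conv_const k4] at this
  · have m1 : R + B ≤ y := (le_max_right _ _).trans ((le_max_right _ _).trans hy)
    have := conv_mono k1 k2 k3 measurable_const h.smooth.continuous.measurable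
      (fun _ => le_refl |1 - η|) (phi_bdd h) y
      (fun z hz => hB.le.trans (h.mono (by linarith [(abs_le.1 (hR z hz)).2])))
    rwa [conv_const k4] at this

theorem key (h : IsTravelingWave S ℓ φ) : ∃ K δ ρ : ℝ, 0 < K ∧ 0 < δ ∧ 0 < ρ ∧ ρ < 1 ∧
    ∀ β y, 0 ≤ β → β ≤ δ →
      S.g (conv (qshift S.q ℓ) φ y + β) ≤ φ (y + K * β * (1 - ρ)) + β * ρ ∧
      φ (y - K * β * (1 - ρ)) - β * ρ ≤ S.g (conv (qshift S.q ℓ) φ y - β) := by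
  obtain ⟨L, hL0, hL⟩ := g_lip S
  obtain ⟨ρ, η, hρ0, hρ1, hη, hc⟩ := g_contr S
  obtain ⟨M, hM, hM1, hM2⟩ := Phi_tail h (half_pos hη)
  obtain ⟨c, hc0, hlow⟩ := dphi_lower h (M + 1) (by linarith)
  have h1ρ : 0 < 1 - ρ := by linarith
  set K := (L + 1) / (c * (1 - ρ)) with hK
  have hKpos : 0 < K := by positivity
  have hKe : c * (K * (1 - ρ)) = L + 1 := by rw [hK]; field_simp
  have hKρ : 0 < K * (1 - ρ) := by positivity
  refine ⟨K, min (η / 2) (1 / (K * (1 - ρ))), ρ, hKpos, by positivity, hρ0, hρ1, ?_⟩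
  intro β y hβ0 hβ
  have hβ1 : β ≤ η / 2 := hβ.trans (min_le_left _ _)
  have hβ2 : β * (K * (1 - ρ)) ≤ 1 := by
    rw [← le_div_iff₀ hKρ]; exact hβ.trans (min_le_right _ _)
  have hsh0 : 0 ≤ K * β * (1 - ρ) := by positivity
  have hsh1 : K * β * (1 - ρ) ≤ 1 := by linarith
  have hw := h.wave_eq y
  set F := conv (qshift S.q ℓ) φ y with hF
  have mono1 : φ y ≤ φ (y + K * β * (1 - ρ)) := h.mono (by linarith)
  have mono2 : φ (y - K * β * (1 - ρ)) ≤ φ y := h.mono (by linarith)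
  by_cases htail : y ≤ -M ∨ M ≤ y
  · have t1 : S.g (F + β) - S.g F ≤ ρ * (F + β - F) := by
      refine hc _ _ (by linarith) ?_
      rcases htail with ht | ht
      · left; linarith [hM1 y ht]
      · right; linarith [hM2 y ht]
    have t2 : S.g F - S.g (F - β) ≤ ρ * (F - (F - β)) := by
      refine hc _ _ (by linarith) ?_
      rcases htail with ht | ht
      · left; linarith [hM1 y ht]
      · right; linarith [hM2 y ht]
    constructor <;> linarith
  · push Not at htail
    have t1 := hL F (F + β) (by linarith)
    have t2 := hL (F - β) F (by linarith)
    have l1 := hlow y (y + K * β * (1 - ρ)) (by linarith) (by linarith) (by linarith)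
    have l2 := hlow (y - K * β * (1 - ρ)) y (by linarith) (by linarith) (by linarith)
    have e : c * (K * β * (1 - ρ)) = (L + 1) * β := by rw [← hKe]; ring
    have e1 : c * (y + K * β * (1 - ρ) - y) = (L + 1) * β := by rw [← e]; ring
    have e2 : c * (y - (y - K * β * (1 - ρ))) = (L + 1) * β := by rw [← e]; ring
    have hβρ : 0 ≤ β * ρ := by positivity
    constructor <;> linarith

end wave
end TW

/-- Stability of the traveling wave under the recursion `w_{n+1} = g(q * w_n)`: if the
initial condition is trapped between shifts of the wave up to an error `β₀ ≤ δ₀`, then the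
solution remains trapped for all times, with exponentially decaying error and shifts moving
by at most `K β₀`. -/
theorem traveling_wave_trapping (S : BistableSetting) (ℓ : ℝ) (φ : ℝ → ℝ)
    (h : IsTravelingWave S ℓ φ) :
    ∃ K δ₀ r₀ : ℝ, 0 < K ∧ 0 < δ₀ ∧ 0 < r₀ ∧
      ∀ (ξm ξp β₀ : ℝ) (w : ℕ → ℝ → ℝ),
        0 ≤ β₀ → β₀ ≤ δ₀ →
        (∀ n, Measurable (w n)) → (∀ n, ∃ C, ∀ x, |w n x| ≤ C) →
        (∀ (n : ℕ) (x : ℝ), w (n + 1) x = S.g (conv S.q (w n) x)) →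
        (∀ x : ℝ, φ (x + ξm) - β₀ ≤ w 0 x ∧ w 0 x ≤ φ (x + ξp) + β₀) →
        ∀ (n : ℕ), 1 ≤ n → ∀ x : ℝ,
          φ (x - n * ℓ + (ξm - K * β₀ * (1 - Real.exp (-r₀ * n))))
              - β₀ * Real.exp (-r₀ * n) ≤ w n x ∧
          w n x ≤ φ (x - n * ℓ + (ξp + K * β₀ * (1 - Real.exp (-r₀ * n))))
              + β₀ * Real.exp (-r₀ * n) := by
  
  obtain ⟨K, δ, ρ, hK, hδ, hρ0, hρ1, H⟩ := TW.key h
  refine ⟨K, δ, -Real.log ρ, hK, hδ, by linarith [Real.log_neg hρ0 hρ1], ?_⟩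
  intro ξm ξp β₀ w hβ0 hβ hmeas hbdd hrec hinit n hn1
  clear hn1
  have hexp : ∀ n : ℕ, Real.exp (-(-Real.log ρ) * n) = ρ ^ n := by
    intro n
    rw [neg_neg, mul_comm, Real.exp_nat_mul, Real.exp_log hρ0]
  simp only [hexp]
  have hqc := S.hq_diff.continuous
  have hφm : Measurable φ := h.smooth.continuous.measurable
  have bd : ∀ a b x, |φ (x + a) + b| ≤ 1 + |b| := fun a b x =>
    (abs_add_le _ _).trans (by linarith [TW.phi_bdd h (x + a)])
  induction n with
  | zero => intro x; simpa using hinit x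
  | succ n ih =>
    intro x
    obtain ⟨C, hC⟩ := hbdd n
    have hρn : ρ ^ n ≤ 1 := pow_le_one₀ hρ0.le hρ1.le
    have hβn0 : 0 ≤ β₀ * ρ ^ n := by positivity
    have hβn : β₀ * ρ ^ n ≤ δ := (mul_le_of_le_one_right hβ0 hρn).trans hβ
    rw [hrec]
    constructor
    · have h1 := TW.conv_mono hqc S.hq_supp S.hq_nonneg
        (u := fun y => φ (y + (-(n * ℓ) + (ξm - K * β₀ * (1 - ρ ^ n)))) + -(β₀ * ρ ^ n))
        (by fun_prop) (hmeas n) (bd _ _) hC x (fun y _ => by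
          have := (ih (x - y)).1
          rw [← sub_eq_add_neg, ← add_assoc, ← sub_eq_add_neg]; exact this)
      rw [TW.conv_add_const hqc S.hq_supp S.hq_int hφm (TW.phi_bdd h)] at h1
      have h2 := (H _ (x + (-(n * ℓ) + (ξm - K * β₀ * (1 - ρ ^ n))) - ℓ) hβn0 hβn).2
      rw [TW.conv_qshift, sub_add_cancel] at h2
      rw [← sub_eq_add_neg] at h1
      have h3 := h2.trans (TW.g_monotone S h1)
      have e : x - ((n + 1 : ℕ) : ℝ) * ℓ + (ξm - K * β₀ * (1 - ρ ^ (n + 1))) =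
          x + (-(n * ℓ) + (ξm - K * β₀ * (1 - ρ ^ n))) - ℓ - K * (β₀ * ρ ^ n) * (1 - ρ) := by
        push_cast; ring
      rw [e, pow_succ, ← mul_assoc β₀ (ρ ^ n) ρ]
      exact h3
    · have h1 := TW.conv_mono hqc S.hq_supp S.hq_nonneg
        (v := fun y => φ (y + (-(n * ℓ) + (ξp + K * β₀ * (1 - ρ ^ n)))) + (β₀ * ρ ^ n))
        (hmeas n) (by fun_prop) hC (bd _ _) x (fun y _ => by
          have := (ih (x - y)).2
          rw [← add_assoc, ← sub_eq_add_neg]; exact this)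
      rw [TW.conv_add_const hqc S.hq_supp S.hq_int hφm (TW.phi_bdd h)] at h1
      have h2 := (H _ (x + (-(n * ℓ) + (ξp + K * β₀ * (1 - ρ ^ n))) - ℓ) hβn0 hβn).1
      rw [TW.conv_qshift, sub_add_cancel] at h2
      have h3 := (TW.g_monotone S h1).trans h2
      have e : x - ((n + 1 : ℕ) : ℝ) * ℓ + (ξp + K * β₀ * (1 - ρ ^ (n + 1))) =
          x + (-(n * ℓ) + (ξp + K * β₀ * (1 - ρ ^ n))) - ℓ + K * (β₀ * ρ ^ n) * (1 - ρ) := by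
        push_cast; ring
      rw [e, pow_succ, ← mul_assoc β₀ (ρ ^ n) ρ]
      exact h3
end

section
/- Let (u_n)_{n≥0} be defined by u_0(x) = 1 for x ≥ 0 and u_0(x) = 0 for x < 0, and u_{n+1}(x) = g((q * u_n)(x)) for all n ≥ 0 and x ∈ ℝ (so u_n is the distribution function of the outcome M_n of the associated random threshold voting model). Let ℓ be the speed of a traveling wave. Then for every ε ∈ (0,1) there exists C > 0 such that for all n ≥ 1: u_n(nℓ + C) ≥ 1 − ε and u_n(nℓ − C) ≤ ε. In particular, setting med_n = inf{x : u_n(x) ≥ 1/2}, one has sup_{n≥1} |med_n − nℓ| < ∞, i.e. the sequence of distributions u_n is tight when centered at its medians. -/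
open MeasureTheory Filter Topology

namespace BRT

/-! ### Basic facts on the polynomial and on convolution -/

lemma g_eq (S : BistableSetting) {t : ℝ} (h0 : 0 ≤ t) (h1 : t ≤ 1) : S.g t = S.P.eval t := by
  simp [BistableSetting.g, not_lt.mpr h0, h1]

lemma P_strictMono (S : BistableSetting) :
    StrictMonoOn (fun t => S.P.eval t) (Set.Icc 0 1) := by
  apply strictMonoOn_of_deriv_pos (convex_Icc _ _) S.P.continuous.continuousOn
  intro x hx
  rw [interior_Icc] at hx
  simpa using S.hP_mono x hx

lemma P_mem (S : BistableSetting) {t : ℝ} (h0 : 0 ≤ t) (h1 : t ≤ 1) :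
    0 ≤ S.P.eval t ∧ S.P.eval t ≤ 1 := by
  have hm := (P_strictMono S).monotoneOn
  constructor
  · have := hm (by simp) (⟨h0, h1⟩ : t ∈ Set.Icc (0:ℝ) 1) h0
    simpa [S.hP0] using this
  · have := hm (⟨h0, h1⟩ : t ∈ Set.Icc (0:ℝ) 1) (by simp) h1
    simpa [S.hP1] using this

lemma q_integrable (S : BistableSetting) : Integrable S.q :=
  S.hq_diff.continuous.integrable_of_hasCompactSupport S.hq_supp

/-- Monotone functions with values in `[0,1]`. -/
def Adm (v : ℝ → ℝ) : Prop := Monotone v ∧ ∀ x, 0 ≤ v x ∧ v x ≤ 1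

lemma Adm.integrable (S : BistableSetting) {v : ℝ → ℝ} (hv : Adm v) (x : ℝ) :
    Integrable (fun y => S.q y * v (x - y)) := by
  apply (q_integrable S).mul_bdd (c := 1)
  · exact (hv.1.measurable.comp (measurable_const.sub measurable_id)).aestronglyMeasurable
  · filter_upwards with y
    rw [Real.norm_eq_abs, abs_of_nonneg (hv.2 _).1]
    exact (hv.2 _).2

lemma conv_mono (S : BistableSetting) {v : ℝ → ℝ} (hv : Adm v) : Monotone (conv S.q v) := by
  intro x x' hx
  apply integral_mono (hv.integrable S x) (hv.integrable S x')
  intro y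
  exact mul_le_mul_of_nonneg_left (hv.1 (by linarith)) (S.hq_nonneg y)

lemma conv_mem (S : BistableSetting) {v : ℝ → ℝ} (hv : Adm v) (x : ℝ) :
    0 ≤ conv S.q v x ∧ conv S.q v x ≤ 1 := by
  constructor
  · exact integral_nonneg fun y => mul_nonneg (S.hq_nonneg y) (hv.2 _).1
  · rw [← S.hq_int]
    apply integral_mono (hv.integrable S x) (q_integrable S)
    intro y
    exact mul_le_of_le_one_right (S.hq_nonneg y) (hv.2 _).2

lemma adm_step (S : BistableSetting) {v : ℝ → ℝ} (hv : Adm v) :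
    Adm (fun x => S.g (conv S.q v x)) := by
  constructor
  · intro x y hxy
    obtain ⟨a, b⟩ := conv_mem S hv x
    obtain ⟨c, d⟩ := conv_mem S hv y
    simp only [g_eq S a b, g_eq S c d]
    exact (P_strictMono S).monotoneOn ⟨a, b⟩ ⟨c, d⟩ (conv_mono S hv hxy)
  · intro x
    obtain ⟨a, b⟩ := conv_mem S hv x
    simp only [g_eq S a b]
    exact P_mem S a b

lemma conv_qshift (q v : ℝ → ℝ) (ℓ x : ℝ) : conv (qshift q ℓ) v x = conv q v (x + ℓ) := by
  unfold conv qshift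
  rw [← integral_add_right_eq_self (fun y => q y * v (x + ℓ - y)) ℓ]
  congr 1; ext y; congr 2; ring

lemma wave_adm {S : BistableSetting} {ℓ : ℝ} {φ : ℝ → ℝ} (h : IsTravelingWave S ℓ φ) : Adm φ :=
  ⟨h.mono, fun x => ⟨h.mono.le_of_tendsto h.limit_bot x, h.mono.ge_of_tendsto h.limit_top x⟩⟩

lemma wave_P {S : BistableSetting} {ℓ : ℝ} {φ : ℝ → ℝ} (h : IsTravelingWave S ℓ φ) (x : ℝ) :
    φ x = S.P.eval (conv S.q φ (x + ℓ)) := by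
  rw [h.wave_eq x, conv_qshift, g_eq S (conv_mem S (wave_adm h) _).1 (conv_mem S (wave_adm h) _).2]

/-! ### Reflection -/

/-- The reflected setting. -/
noncomputable def refl (S : BistableSetting) : BistableSetting where
  q := fun x => S.q (-x)
  P := 1 - S.P.comp (1 - Polynomial.X)
  θ := 1 - S.θ
  hq_diff := S.hq_diff.comp contDiff_neg
  hq_supp := S.hq_supp.comp_homeomorph (Homeomorph.neg ℝ)
  hq_nonneg := fun x => S.hq_nonneg _
  hq_int := by rw [integral_neg_eq_self S.q]; exact S.hq_int
  hP0 := by simp [S.hP1]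
  hP1 := by simp [S.hP0]
  hP_range := by
    intro x hx
    have := S.hP_range (1 - x) ⟨by linarith [hx.2], by linarith [hx.1]⟩
    simp; exact ⟨by linarith, by linarith⟩
  hP_mono := by
    intro x hx
    have := S.hP_mono (1 - x) ⟨by linarith [hx.2], by linarith [hx.1]⟩
    simpa [Polynomial.derivative_comp] using this
  hθ_mem := ⟨by linarith [S.hθ_mem.2], by linarith [S.hθ_mem.1]⟩
  hθ_zero := by simp [S.hθ_zero]
  hθ_unique := by
    intro x hx hxe
    have := S.hθ_unique (1 - x) ⟨by linarith [hx.2], by linarith [hx.1]⟩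
    simp at hxe
    linarith [this (by linarith)]
  hf'0 := by simpa [Polynomial.derivative_comp] using S.hf'1
  hf'1 := by simpa [Polynomial.derivative_comp] using S.hf'0

lemma adm_refl {v : ℝ → ℝ} (hv : Adm v) : Adm (fun x => 1 - v (-x)) := by
  constructor
  · intro x y hxy
    have := hv.1 (neg_le_neg hxy)
    simp only; linarith
  · intro x
    have := hv.2 (-x)
    exact ⟨by linarith, by linarith⟩

lemma conv_refl (S : BistableSetting) {v : ℝ → ℝ} (hv : Adm v) (x : ℝ) :
    conv (refl S).q (fun x => 1 - v (-x)) x = 1 - conv S.q v (-x) := by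
  unfold conv refl
  simp only
  have h1 := integral_sub (q_integrable S) (hv.integrable S (-x))
  rw [S.hq_int] at h1
  rw [← integral_neg_eq_self, ← h1]
  congr 1; ext y; simp only [neg_neg]; rw [show -(x - -y) = -x - y by ring]; ring

lemma g_refl (S : BistableSetting) {t : ℝ} (h0 : 0 ≤ t) (h1 : t ≤ 1) :
    (refl S).g (1 - t) = 1 - S.g t := by
  rw [g_eq _ (by linarith) (by linarith), g_eq S h0 h1]
  simp [refl]

lemma wave_refl {S : BistableSetting} {ℓ : ℝ} {φ : ℝ → ℝ} (h : IsTravelingWave S ℓ φ) :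
    IsTravelingWave (refl S) (-ℓ) (fun x => 1 - φ (-x)) where
  mono := (adm_refl (wave_adm h)).1
  smooth := contDiff_const.sub (h.smooth.comp contDiff_neg)
  wave_eq := by
    intro x
    have hc := conv_mem S (wave_adm h) (-x + ℓ)
    rw [conv_qshift, conv_refl S (wave_adm h), show -(x + -ℓ) = -x + ℓ by ring,
      g_refl S hc.1 hc.2, h.wave_eq, conv_qshift]
  limit_bot := by
    have := (h.limit_top.comp tendsto_neg_atBot_atTop).const_sub 1
    simpa using this
  limit_top := by
    have := (h.limit_bot.comp tendsto_neg_atTop_atBot).const_sub 1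
    simpa using this

/-! ### Constants -/

lemma exists_const0 (S : BistableSetting) : ∃ ρ ∈ Set.Ioo (0:ℝ) 1, ∃ η > 0, η < 1 ∧
    ∀ ρ' ≥ ρ, ∀ η' ≤ η, ∀ t s, 0 ≤ t → t ≤ s → s ≤ η' →
      S.P.eval s - S.P.eval t ≤ ρ' * (s - t) := by
  obtain ⟨ρ, hρ1, hρ2⟩ := exists_between (max_lt zero_lt_one S.hf'0)
  have hc : ∀ᶠ x in 𝓝 (0:ℝ), (Polynomial.derivative S.P).eval x < ρ :=
    (Polynomial.derivative S.P).continuous.continuousAt.eventually_lt continuousAt_const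
      (lt_of_le_of_lt (le_max_right _ _) hρ1)
  obtain ⟨e, he, hb⟩ := Metric.eventually_nhds_iff.mp hc
  refine ⟨ρ, ⟨lt_of_le_of_lt (le_max_left _ _) hρ1, hρ2⟩, min (e/2) (1/2), by positivity,
    lt_of_le_of_lt (min_le_right _ _) (by norm_num), ?_⟩
  intro ρ' hρ' η' hη' t s h0 hts hs
  have := Convex.image_sub_le_mul_sub_of_deriv_le (convex_Icc (0:ℝ) (min (e/2) (1/2)))
    (f := fun t => S.P.eval t) S.P.continuous.continuousOn S.P.differentiable.differentiableOn
    (C := ρ) (by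
      intro x hx
      rw [interior_Icc] at hx
      have h2 : x < e / 2 := lt_of_lt_of_le hx.2 (min_le_left _ _)
      have := hb (y := x) (by rw [dist_zero_right, Real.norm_eq_abs, abs_of_pos hx.1]; linarith)
      simpa using this.le) t ⟨h0, by linarith⟩ s ⟨by linarith, by linarith⟩ hts
  nlinarith

lemma exists_const (S : BistableSetting) : ∃ ρ ∈ Set.Ioo (0:ℝ) 1, ∃ η > 0, η < 1 ∧
    (∀ t s, 0 ≤ t → t ≤ s → s ≤ η → S.P.eval s - S.P.eval t ≤ ρ * (s - t)) ∧
    (∀ t s, 1 - η ≤ t → t ≤ s → s ≤ 1 → S.P.eval s - S.P.eval t ≤ ρ * (s - t)) := by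
  obtain ⟨ρ, hρ, η, hη, hη1, H⟩ := exists_const0 S
  obtain ⟨ρ', hρ', η', hη', hη1', H'⟩ := exists_const0 (refl S)
  refine ⟨max ρ ρ', ⟨lt_max_of_lt_left hρ.1, max_lt hρ.2 hρ'.2⟩, min η η', lt_min hη hη',
    lt_of_le_of_lt (min_le_left _ _) hη1, H _ (le_max_left _ _) _ (min_le_left _ _), ?_⟩
  intro t s ht hts hs
  have := H' _ (le_max_right ρ ρ') _ (min_le_right η η') (1 - s) (1 - t) (by linarith)
    (by linarith) (by linarith)
  simp [refl] at this
  linarith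

lemma exists_lip (S : BistableSetting) : ∃ K > 0, ∀ t s, 0 ≤ t → t ≤ s → s ≤ 1 →
    S.P.eval s - S.P.eval t ≤ K * (s - t) := by
  obtain ⟨K, hK⟩ := (isCompact_Icc (a := (0:ℝ)) (b := 1)).bddAbove_image
    (Polynomial.derivative S.P).continuous.continuousOn
  refine ⟨max K 1, by positivity, ?_⟩
  intro t s h0 hts h1
  refine Convex.image_sub_le_mul_sub_of_deriv_le (convex_Icc (0:ℝ) 1)
    (f := fun t => S.P.eval t) S.P.continuous.continuousOn S.P.differentiable.differentiableOn
    (C := max K 1) ?_ t ⟨h0, by linarith⟩ s ⟨by linarith, by linarith⟩ hts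
  intro x hx
  have := hK (Set.mem_image_of_mem _ (interior_subset hx))
  simp only [Polynomial.deriv]
  exact this.trans (le_max_left _ _)

/-! ### Strict positivity of the wave and its derivative -/

lemma exists_left {S : BistableSetting} {ℓ : ℝ} {φ : ℝ → ℝ} (h : IsTravelingWave S ℓ φ) :
    ∃ z < ℓ, 0 < S.q z := by
  by_contra hcon
  push Not at hcon
  obtain ⟨ρ, hρ, η, hη, hη1, H, -⟩ := exists_const S
  have hφ := wave_adm h
  obtain ⟨x, hx⟩ : η ∈ Set.range φ := by
    apply mem_range_of_exists_le_of_exists_ge h.smooth.continuous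
    · exact (h.limit_bot.eventually_le_const hη).exists
    · exact (h.limit_top.eventually_const_le hη1).exists
  have hle : conv S.q φ (x + ℓ) ≤ η := by
    have : ∫ y, S.q y * η = η := by rw [integral_mul_const, S.hq_int, one_mul]
    rw [← this]
    apply integral_mono (hφ.integrable S _) ((q_integrable S).mul_const _)
    intro y
    simp only
    rcases lt_or_ge y ℓ with hy | hy
    · rw [le_antisymm (hcon y hy) (S.hq_nonneg y)]; simp
    · rw [← hx]
      exact mul_le_mul_of_nonneg_left (h.mono (by linarith)) (S.hq_nonneg y)
  have h0 := (conv_mem S hφ (x + ℓ)).1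
  have e := wave_P h x
  have := H 0 _ le_rfl h0 hle
  rw [S.hP0, ← e, hx] at this
  nlinarith [hρ.1, hρ.2]

lemma wave_pos {S : BistableSetting} {ℓ : ℝ} {φ : ℝ → ℝ} (h : IsTravelingWave S ℓ φ) (x : ℝ) :
    0 < φ x := by
  by_contra hx
  have hφ := wave_adm h
  obtain ⟨z, hz, hqz⟩ := exists_left h
  have step : ∀ x, φ x = 0 → φ (x + (ℓ - z)) = 0 := by
    intro x hx
    by_contra hne
    have hc := conv_mem S hφ (x + ℓ)
    have : 0 < conv S.q φ (x + ℓ) := by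
      apply Continuous.integral_pos_of_hasCompactSupport_nonneg_nonzero (x := z)
      · exact S.hq_diff.continuous.mul (h.smooth.continuous.comp (by fun_prop))
      · exact S.hq_supp.mul_right
      · intro y; exact mul_nonneg (S.hq_nonneg y) (hφ.2 _).1
      · apply mul_ne_zero hqz.ne'
        rwa [show x + ℓ - z = x + (ℓ - z) by ring]
    have h3 := P_strictMono S (by simp) (⟨hc.1, hc.2⟩ : _ ∈ Set.Icc (0:ℝ) 1) this
    simp only [S.hP0, ← wave_P h x] at h3
    linarith
  have it : ∀ n : ℕ, φ (x + n * (ℓ - z)) = 0 := by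
    intro n
    induction n with
    | zero => simpa using le_antisymm (not_lt.mp hx) (hφ.2 x).1
    | succ n ih =>
      have := step _ ih
      rw [← this]; push_cast; congr 1; ring
  have ht : Tendsto (fun n : ℕ => x + n * (ℓ - z)) atTop atTop :=
    tendsto_atTop_add_const_left _ _
      (tendsto_natCast_atTop_atTop.atTop_mul_const (by linarith))
  have h5 := h.limit_top.comp ht
  have e : φ ∘ (fun n : ℕ => x + n * (ℓ - z)) = fun _ => (0:ℝ) := funext it
  rw [e] at h5
  have := tendsto_nhds_unique h5 tendsto_const_nhds
  norm_num at this

lemma wave_lt_one {S : BistableSetting} {ℓ : ℝ} {φ : ℝ → ℝ} (h : IsTravelingWave S ℓ φ) (x : ℝ) :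
    φ x < 1 := by
  have := wave_pos (wave_refl h) (-x)
  simp only [neg_neg] at this
  linarith

lemma conv_Ioo {S : BistableSetting} {ℓ : ℝ} {φ : ℝ → ℝ} (h : IsTravelingWave S ℓ φ) (x : ℝ) :
    conv S.q φ (x + ℓ) ∈ Set.Ioo (0:ℝ) 1 := by
  have hc := conv_mem S (wave_adm h) (x + ℓ)
  have e := wave_P h x
  refine ⟨lt_of_le_of_ne hc.1 ?_, lt_of_le_of_ne hc.2 ?_⟩
  · intro h0
    rw [← h0, S.hP0] at e
    linarith [wave_pos h x]
  · intro h0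
    rw [h0, S.hP1] at e
    linarith [wave_lt_one h x]

lemma conv_deriv (S : BistableSetting) {φ : ℝ → ℝ} (hs : ContDiff ℝ 1 φ) (x : ℝ) :
    HasDerivAt (conv S.q φ) (∫ y, S.q y * deriv φ (x - y)) x := by
  have hqc := S.hq_diff.continuous
  have hd : Continuous (deriv φ) := hs.continuous_deriv le_rfl
  obtain ⟨B, hB⟩ := ((isCompact_closedBall x 1).prod S.hq_supp).exists_bound_of_continuousOn
    (f := fun p : ℝ × ℝ => deriv φ (p.1 - p.2)) (by fun_prop)
  refine (hasDerivAt_integral_of_dominated_loc_of_deriv_le (s := Metric.ball x 1)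
    (bound := fun y => S.q y * B) (F := fun x y => S.q y * φ (x - y))
    (F' := fun x y => S.q y * deriv φ (x - y))
    (Metric.ball_mem_nhds x one_pos) ?_ ?_ ?_ ?_ ?_ ?_).2
  · filter_upwards with x'
    exact (hqc.mul (hs.continuous.comp (by fun_prop))).aestronglyMeasurable
  · exact (hqc.mul (hs.continuous.comp (by fun_prop))).integrable_of_hasCompactSupport
      S.hq_supp.mul_right
  · exact (hqc.mul (hd.comp (by fun_prop))).aestronglyMeasurable
  · filter_upwards with y x' hx'
    rw [norm_mul, Real.norm_eq_abs, abs_of_nonneg (S.hq_nonneg y)]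
    by_cases hy : y ∈ tsupport S.q
    · exact mul_le_mul_of_nonneg_left
        (hB (x', y) ⟨Metric.ball_subset_closedBall hx', hy⟩) (S.hq_nonneg y)
    · simp [image_eq_zero_of_notMem_tsupport hy]
  · exact (q_integrable S).mul_const _
  · filter_upwards with y x' hx'
    have h1 : HasDerivAt φ (deriv φ (x' - y)) (x' - y) :=
      (hs.differentiable one_ne_zero _).hasDerivAt
    exact (h1.comp_sub_const x' y).const_mul _

lemma deriv_wave_pos {S : BistableSetting} {ℓ : ℝ} {φ : ℝ → ℝ} (h : IsTravelingWave S ℓ φ)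
    (x : ℝ) : 0 < deriv φ x := by
  have hnn : ∀ x, 0 ≤ deriv φ x := fun x => h.mono.deriv_nonneg
  have hd : Continuous (deriv φ) := h.smooth.continuous_deriv le_rfl
  by_contra hx
  have step : ∀ x z, 0 < S.q z → deriv φ x = 0 → deriv φ (x + (ℓ - z)) = 0 := by
    intro x z hz hx0
    by_contra hne
    have hpos : 0 < ∫ y, S.q y * deriv φ (x + ℓ - y) := by
      apply Continuous.integral_pos_of_hasCompactSupport_nonneg_nonzero (x := z)
      · exact S.hq_diff.continuous.mul (hd.comp (by fun_prop))
      · exact S.hq_supp.mul_right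
      · intro y; exact mul_nonneg (S.hq_nonneg y) (hnn _)
      · apply mul_ne_zero hz.ne'
        rwa [show x + ℓ - z = x + (ℓ - z) by ring]
    have h1 := (conv_deriv S h.smooth (x + ℓ)).comp_add_const x ℓ
    have h2 := (S.P.hasDerivAt (conv S.q φ (x + ℓ))).comp x h1
    have e : φ = (fun t => S.P.eval t) ∘ fun x => conv S.q φ (x + ℓ) := funext (wave_P h)
    rw [e, h2.deriv] at hx0
    have h4 := S.hP_mono _ (conv_Ioo h x)
    exact (mul_pos h4 hpos).ne' hx0
  obtain ⟨z, hz, hqz⟩ := exists_left h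
  obtain ⟨e, he, hb⟩ := Metric.eventually_nhds_iff.mp
    (continuousAt_const.eventually_lt (S.hq_diff.continuous.continuousAt (x := z)) hqz)
  obtain ⟨r, hr0, hr⟩ := exists_between (lt_min he (sub_pos.mpr hz))
  have hre := hr.trans_le (min_le_left _ _)
  have hrz := hr.trans_le (min_le_right _ _)
  obtain ⟨a, ha⟩ : ∃ a, a = ℓ - z - r := ⟨_, rfl⟩
  obtain ⟨b, hbd⟩ : ∃ b, b = ℓ - z + r := ⟨_, rfl⟩
  have ha0 : 0 < a := by linarith
  have hab : a < b := by linarith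
  have it : ∀ d, a < d → d < b → ∀ n : ℕ, deriv φ (x + n * d) = 0 := by
    intro d h1 h2 n
    induction n with
    | zero => simpa using le_antisymm (not_lt.mp hx) (hnn x)
    | succ n ih =>
      have hq : 0 < S.q (ℓ - d) := by
        apply hb
        rw [Real.dist_eq, abs_lt]
        constructor <;> linarith
      have := step _ _ hq ih
      rw [← this]; push_cast; congr 1; ring
  have hk : 0 < 1 / a - 1 / b := sub_pos.mpr (one_div_lt_one_div_of_lt ha0 hab)
  obtain ⟨R, hR⟩ : ∃ R, R = 1 / (1 / a - 1 / b) := ⟨_, rfl⟩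
  have hR0 : 0 < R := by rw [hR]; positivity
  have zero : ∀ t, R < t → deriv φ (x + t) = 0 := by
    intro t ht
    have ht0 : 0 < t := hR0.trans ht
    have hb0 : 0 < b := ha0.trans hab
    have h1 : 1 < t * (1 / a - 1 / b) := by
      rw [hR, div_lt_iff₀ hk] at ht
      exact ht
    have h2 : t / b < (⌊t / b⌋₊ + 1 : ℕ) := by push_cast; exact Nat.lt_floor_add_one _
    have h3 : ((⌊t / b⌋₊ + 1 : ℕ) : ℝ) < t / a := by
      push_cast
      have := Nat.floor_le (by positivity : 0 ≤ t / b)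
      have e1 : t * (1 / a - 1 / b) = t / a - t / b := by ring
      linarith
    generalize (⌊t / b⌋₊ + 1 : ℕ) = m at h2 h3
    have hm : (0:ℝ) < m := lt_trans (by positivity) h2
    have := it (t / m) (by rw [lt_div_iff₀ hm]; rw [lt_div_iff₀ ha0] at h3; linarith)
      (by rw [div_lt_iff₀ hm]; rw [div_lt_iff₀ hb0] at h2; linarith) m
    rwa [mul_div_cancel₀ _ hm.ne'] at this
  have hle : ∀ y ≥ x + R, φ y ≤ φ (x + R) := by
    intro y hy
    have := Convex.image_sub_le_mul_sub_of_deriv_le (convex_Ici (x + R)) (f := φ)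
      h.smooth.continuous.continuousOn (h.smooth.differentiable one_ne_zero).differentiableOn
      (C := 0) (by
        intro w hw
        rw [interior_Ici] at hw
        have := zero (w - x) (by linarith [Set.mem_Ioi.mp hw])
        rw [show x + (w - x) = w by ring] at this
        exact this.le) (x + R) Set.self_mem_Ici y hy hy
    linarith
  have h1 : (1:ℝ) ≤ φ (x + R) :=
    le_of_tendsto h.limit_top (by filter_upwards [eventually_ge_atTop (x + R)] with y hy using hle y hy)
  linarith [wave_lt_one h (x + R)]

end BRT
namespace BRT

/-! ### The supersolution -/

lemma wave_growth {S : BistableSetting} {ℓ : ℝ} {φ : ℝ → ℝ} (h : IsTravelingWave S ℓ φ)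
    {α β : ℝ} (hα : 0 < α) (hβ : β < 1) :
    ∃ c > 0, ∀ x k, α ≤ φ x → φ x ≤ β → 0 ≤ k → k ≤ 1 → c * k ≤ φ (x + k) - φ x := by
  obtain ⟨L, hL⟩ := (h.limit_bot.eventually_lt_const hα).exists
  obtain ⟨R, hR⟩ := (h.limit_top.eventually_const_lt hβ).exists
  have hd : Continuous (deriv φ) := h.smooth.continuous_deriv le_rfl
  obtain ⟨c, hc, hcb⟩ : ∃ c > 0, ∀ y ∈ Set.Icc L (R + 1), c ≤ deriv φ y := by
    rcases (Set.Icc L (R + 1)).eq_empty_or_nonempty with he | hne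
    · exact ⟨1, one_pos, by simp [he]⟩
    · obtain ⟨y, -, hy⟩ := isCompact_Icc.exists_isMinOn hne hd.continuousOn
      exact ⟨deriv φ y, deriv_wave_pos h y, fun w hw => hy hw⟩
  refine ⟨c, hc, ?_⟩
  intro x k h1 h2 h3 h4
  have hx1 : L < x := h.mono.reflect_lt (lt_of_lt_of_le hL h1)
  have hx2 : x < R := h.mono.reflect_lt (lt_of_le_of_lt h2 hR)
  have := Convex.mul_sub_le_image_sub_of_le_deriv (convex_Icc L (R + 1)) (f := φ)
    h.smooth.continuous.continuousOn (h.smooth.differentiable one_ne_zero).differentiableOn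
    (C := c) (fun w hw => hcb w (interior_subset hw)) x ⟨by linarith, by linarith⟩ (x + k)
    ⟨by linarith, by linarith⟩ (by linarith)
  linarith [this]

lemma upper {S : BistableSetting} {ℓ : ℝ} {φ : ℝ → ℝ} (h : IsTravelingWave S ℓ φ)
    {u : ℕ → ℝ → ℝ} (ha : ∀ n, Adm (u n)) (h0 : ∀ x < 0, u 0 x = 0)
    (hrec : ∀ (n : ℕ) (x : ℝ), u (n + 1) x = S.g (conv S.q (u n) x)) {ε : ℝ} (hε : 0 < ε) :
    ∃ C > (0 : ℝ), ∀ n : ℕ, u n (n * ℓ - C) ≤ ε := by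
  have hφ := wave_adm h
  obtain ⟨ρ, hρ, η, hη, hη1, H0, H1⟩ := exists_const S
  obtain ⟨K, hK, HK⟩ := exists_lip S
  have hPa := S.hP_range (η / 2) ⟨by linarith, by linarith⟩
  have hPb := S.hP_range (1 - η / 2) ⟨by linarith, by linarith⟩
  obtain ⟨c, hc, hgrow⟩ := wave_growth h hPa.1 hPb.2
  -- the size of the initial error
  obtain ⟨δ, hδ0, hδ⟩ := exists_between (lt_min (lt_min (half_pos hε) (half_pos hη)) (div_pos hc hK))
  have hδε := hδ.trans_le ((min_le_left _ _).trans (min_le_left _ _))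
  have hδη := hδ.trans_le ((min_le_left _ _).trans (min_le_right _ _))
  have hδc := hδ.trans_le (min_le_right _ _)
  obtain ⟨B, hB⟩ : ∃ B, B = K / c / (1 - ρ) := ⟨_, rfl⟩
  have hρ1 : 0 < 1 - ρ := by linarith [hρ.2]
  have hB0 : 0 < B := by rw [hB]; positivity
  obtain ⟨A0, hA0⟩ := (h.limit_top.eventually_const_lt (show 1 - δ < 1 by linarith)).exists
  obtain ⟨A, hA⟩ : ∃ A, A = A0 + B * δ := ⟨_, rfl⟩
  have key : ∀ n : ℕ, ∀ x, u n x ≤ φ (x - n * ℓ + (A - B * (δ * ρ ^ n))) + δ * ρ ^ n := by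
    intro n
    induction n with
    | zero =>
      intro x
      simp only [Nat.cast_zero, zero_mul, sub_zero, pow_zero, mul_one]
      rcases lt_or_ge x 0 with hx | hx
      · rw [h0 x hx]
        linarith [(hφ.2 (x + (A - B * δ))).1]
      · have h1 := ((ha 0).2 x).2
        have h2 : φ A0 ≤ φ (x + (A - B * δ)) := h.mono (by linarith)
        linarith
    | succ n ih =>
      intro x
      obtain ⟨d, hd⟩ : ∃ d, d = δ * ρ ^ n := ⟨_, rfl⟩
      have hd0 : 0 < d := by rw [hd]; exact mul_pos hδ0 (pow_pos hρ.1 n)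
      have hdδ : d ≤ δ := by
        rw [hd]; exact mul_le_of_le_one_right hδ0.le (pow_le_one₀ hρ.1.le hρ.2.le)
      have hd1 : δ * ρ ^ (n + 1) = ρ * d := by rw [hd]; ring
      rw [← hd] at ih
      rw [hd1]
      obtain ⟨y, hy⟩ : ∃ y, y = x - (n + 1) * ℓ + (A - B * d) := ⟨_, rfl⟩
      obtain ⟨k, hk⟩ : ∃ k, k = K / c * d := ⟨_, rfl⟩
      have hk0 : 0 ≤ k := by rw [hk]; positivity
      have hk1 : k ≤ 1 := by
        have : d ≤ c / K := by linarith
        rw [le_div_iff₀ hK] at this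
        rw [hk, div_mul_eq_mul_div, div_le_one hc]; linarith
      have hyk : x - ((n + 1 : ℕ) : ℝ) * ℓ + (A - B * (ρ * d)) = y + k := by
        have : B * (1 - ρ) = K / c := by rw [hB]; field_simp
        rw [hk, ← this, hy]; push_cast; ring
      rw [hyk]
      -- convolution estimate
      obtain ⟨t, ht⟩ : ∃ t, t = conv S.q φ (y + ℓ) := ⟨_, rfl⟩
      have htm := conv_Ioo h y
      have hwy := wave_P h y
      rw [← ht] at htm hwy
      obtain ⟨w, hw⟩ : ∃ w, w = conv S.q (u n) x := ⟨_, rfl⟩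
      have hwm := conv_mem S (ha n) x
      rw [hrec, ← hw]
      rw [← hw] at hwm
      rw [g_eq S hwm.1 hwm.2]
      have hwt : w ≤ t + d := by
        have e1 : ∫ z, (S.q z * φ (y + ℓ - z) + S.q z * d) = t + d := by
          rw [integral_add (hφ.integrable S _) ((q_integrable S).mul_const _),
            integral_mul_const, S.hq_int, one_mul, ht]
          rfl
        rw [← e1, hw]
        apply integral_mono ((ha n).integrable S x)
          ((hφ.integrable S _).add ((q_integrable S).mul_const _))
        intro z
        have h1 := ih (x - z)
        rw [show x - z - n * ℓ + (A - B * d) = y + ℓ - z by rw [hy]; ring] at h1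
        have := mul_le_mul_of_nonneg_left h1 (S.hq_nonneg z)
        simp only [Pi.add_apply]
        linarith
      -- replace `w` by `s = min 1 (t + d)`
      obtain ⟨s, hs⟩ : ∃ s, s = min 1 (t + d) := ⟨_, rfl⟩
      have hs1 : s ≤ 1 := by rw [hs]; exact min_le_left _ _
      have hsd : s ≤ t + d := by rw [hs]; exact min_le_right _ _
      have hts : t ≤ s := by rw [hs]; exact le_min htm.2.le (by linarith)
      have hws : w ≤ s := by rw [hs]; exact le_min hwm.2 hwt
      have hPw : S.P.eval w ≤ S.P.eval s :=
        (P_strictMono S).monotoneOn ⟨hwm.1, hwm.2⟩ ⟨by linarith [htm.1], hs1⟩ hws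
      have hmono : φ y ≤ φ (y + k) := h.mono (by linarith)
      have hρd : ρ * (s - t) ≤ ρ * d := mul_le_mul_of_nonneg_left (by linarith) hρ.1.le
      rcases le_or_gt t (η / 2) with hc1 | hc1
      · have := H0 t s htm.1.le hts (by linarith)
        linarith
      rcases le_or_gt (1 - η / 2) t with hc2 | hc2
      · have := H1 t s (by linarith) hts hs1
        linarith
      have g1 : S.P.eval (η / 2) ≤ φ y := by
        rw [hwy]
        exact (P_strictMono S).monotoneOn ⟨by linarith, by linarith⟩ ⟨htm.1.le, htm.2.le⟩ hc1.le
      have g2 : φ y ≤ S.P.eval (1 - η / 2) := by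
        rw [hwy]
        exact (P_strictMono S).monotoneOn ⟨htm.1.le, htm.2.le⟩ ⟨by linarith, by linarith⟩ hc2.le
      have g3 := hgrow y k g1 g2 hk0 hk1
      have g4 : c * k = K * d := by rw [hk]; field_simp
      have g5 := HK t s htm.1.le hts hs1
      have g6 : K * (s - t) ≤ K * d := mul_le_mul_of_nonneg_left (by linarith) hK.le
      have g7 : 0 < ρ * d := mul_pos hρ.1 hd0
      linarith
  obtain ⟨L, hL⟩ := (h.limit_bot.eventually_lt_const (half_pos hε)).exists
  refine ⟨max 1 (A - L), by positivity, ?_⟩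
  intro n
  have h1 := key n (n * ℓ - max 1 (A - L))
  have hp : 0 < ρ ^ n := pow_pos hρ.1 n
  have hd : δ * ρ ^ n ≤ δ := mul_le_of_le_one_right hδ0.le (pow_le_one₀ hρ.1.le hρ.2.le)
  have hBd : 0 < B * (δ * ρ ^ n) := by positivity
  have h2 : φ (n * ℓ - max 1 (A - L) - n * ℓ + (A - B * (δ * ρ ^ n))) ≤ φ L :=
    h.mono (by linarith [le_max_right 1 (A - L)])
  linarith

end BRT

/-- Tightness for the bistable recursion started from a step initial condition: the
distribution functions `u_n` are trapped within distance `O(1)` of `nℓ`, where `ℓ` is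
the traveling wave speed; in particular the medians satisfy `med_n = nℓ + O(1)`. -/
theorem bistable_recursion_tightness (S : BistableSetting) (ℓ : ℝ) (φ : ℝ → ℝ)
    (h : IsTravelingWave S ℓ φ) (u : ℕ → ℝ → ℝ)
    (h0 : ∀ x : ℝ, u 0 x = if 0 ≤ x then 1 else 0)
    (hrec : ∀ (n : ℕ) (x : ℝ), u (n + 1) x = S.g (conv S.q (u n) x)) :
    (∀ ε ∈ Set.Ioo (0 : ℝ) 1, ∃ C > (0 : ℝ), ∀ n : ℕ, 1 ≤ n →
        1 - ε ≤ u n (n * ℓ + C) ∧ u n (n * ℓ - C) ≤ ε) ∧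
    ∃ M : ℝ, ∀ n : ℕ, 1 ≤ n →
      |sInf {x : ℝ | 1 / 2 ≤ u n x} - n * ℓ| ≤ M := by
  have ha : ∀ n, BRT.Adm (u n) := by
    intro n
    induction n with
    | zero =>
      constructor
      · intro x y hxy
        rw [h0, h0]
        split_ifs with h1 h2
        · exact le_rfl
        · exact absurd (h1.trans hxy) h2
        · exact zero_le_one
        · exact le_rfl
      · intro x
        rw [h0]
        split_ifs <;> norm_num
    | succ n ih =>
      have e : u (n + 1) = fun x => S.g (conv S.q (u n) x) := funext (hrec n)
      rw [e]
      exact BRT.adm_step S ih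
  have main : ∀ ε ∈ Set.Ioo (0 : ℝ) 1, ∃ C > (0 : ℝ), ∀ n : ℕ, 1 ≤ n →
        1 - ε ≤ u n (n * ℓ + C) ∧ u n (n * ℓ - C) ≤ ε := by
    intro ε hε
    obtain ⟨C1, hC1, H1⟩ := BRT.upper h ha
      (fun x hx => by rw [h0, if_neg (not_le.mpr hx)]) hrec hε.1
    obtain ⟨C2, hC2, H2⟩ := BRT.upper (BRT.wave_refl h) (u := fun n x => 1 - u n (-x))
      (fun n => BRT.adm_refl (ha n))
      (fun x hx => by
        show 1 - u 0 (-x) = 0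
        rw [h0, if_pos (by linarith)]; norm_num)
      (fun n x => by
        have hc := BRT.conv_mem S (ha n) (-x)
        show 1 - u (n + 1) (-x) = _
        rw [BRT.conv_refl S (ha n), BRT.g_refl S hc.1 hc.2, hrec]) hε.1
    refine ⟨max C1 C2, lt_max_of_lt_left hC1, ?_⟩
    intro n _
    constructor
    · have h1 := H2 n
      have h2 : u n (-(n * -ℓ - C2)) ≤ u n (n * ℓ + max C1 C2) :=
        (ha n).1 (by linarith [le_max_right C1 C2])
      linarith
    · exact ((ha n).1 (by linarith [le_max_left C1 C2])).trans (H1 n)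
  refine ⟨main, ?_⟩
  obtain ⟨C, hC, H⟩ := main (1 / 4) ⟨by norm_num, by norm_num⟩
  refine ⟨C, ?_⟩
  intro n hn
  obtain ⟨h1, h2⟩ := H n hn
  have hlb : ∀ x ∈ {x : ℝ | 1 / 2 ≤ u n x}, n * ℓ - C ≤ x := by
    intro x hx
    by_contra hlt
    have := (ha n).1 (not_le.mp hlt).le
    have hx' : 1 / 2 ≤ u n x := hx
    linarith
  have hmem : n * ℓ + C ∈ {x : ℝ | 1 / 2 ≤ u n x} := by
    show 1 / 2 ≤ u n (n * ℓ + C)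
    linarith
  have h3 := csInf_le ⟨_, hlb⟩ hmem
  have h4 := le_csInf ⟨_, hmem⟩ hlb
  rw [abs_le]
  constructor <;> linarith
end
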